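/- arXiv:0812.1219 — 2 statements merged into one kernel-verified Lean document; each statement's English description precedes it below -/
import Mathlib

section
/- Let n = (n₁;n₂) ∈ ℤ₊^{m₁+1}(•) × ℤ₊^{m₂+1}(•) with n_{1,m₁} ≥ 1, and S¹ = N(σ¹_0,…,σ¹_{m₁}), S² = N(σ²_0,…,σ²_{m₂}) with σ¹_0 = σ²_0. Then for each j = 0,…,m₂: ∫ x^ν A_{n,−j}(x) d s²_{j,k}(x) = 0 for every k = j,…,m₂ and every ν = 0,…,n_{2,k} − 1. -/
open MeasureTheory Polynomial Set Filter

noncomputable section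

/-- The support of a Borel measure on `ℝ`: points all of whose open neighborhoods
have positive measure. -/
def msupport (μ : Measure ℝ) : Set ℝ :=
  {x : ℝ | ∀ U : Set ℝ, IsOpen U → x ∈ U → μ U ≠ 0}

/-- The copy of a real set inside `ℂ`. -/
def cpx (s : Set ℝ) : Set ℂ := (fun x : ℝ => (x : ℂ)) '' s

/-- `nikhat μ e j g` is the Cauchy transform of the measure `⟨σ_j, …, σ_{j+g}⟩`,
where `σ_i = (e i) • (μ i)` is a measure of constant sign. -/
def nikhat (μ : ℕ → Measure ℝ) (e : ℕ → ℝ) : ℕ → ℕ → ℂ → ℂ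
  | j, 0, z => (e j : ℂ) * ∫ t, 1 / (z - (t : ℂ)) ∂(μ j)
  | j, g + 1, z => (e j : ℂ) * ∫ t, nikhat μ e (j + 1) g (t : ℂ) / (z - (t : ℂ)) ∂(μ j)

/-- The Cauchy transform `ŝ_{j+1,k}` of `s_{j+1,k} = ⟨σ_{j+1},…,σ_k⟩`, with the
convention that it is `≡ 1` when `k ≤ j`. -/
def wt (μ : ℕ → Measure ℝ) (e : ℕ → ℝ) (j k : ℕ) (z : ℂ) : ℂ :=
  if j < k then nikhat μ e (j + 1) (k - (j + 1)) z else 1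

/-- Integral of `f` against the measure `s_{j,k} = ⟨σ_j, …, σ_k⟩`
(whose density with respect to `σ_j` is `ŝ_{j+1,k}`). -/
def sInt (μ : ℕ → Measure ℝ) (e : ℕ → ℝ) (j k : ℕ) (f : ℝ → ℂ) : ℂ :=
  (e j : ℂ) * ∫ x, f x * wt μ e j k (x : ℂ) ∂(μ j)

/-- The linear form `𝒜_{n,j}(z) = ∑_{k=j}^{m₁} a_k(z) ŝ¹_{j+1,k}(z)`. -/
def linForm (μ : ℕ → Measure ℝ) (e : ℕ → ℝ) (m₁ j : ℕ) (A : ℕ → Polynomial ℝ)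
    (z : ℂ) : ℂ :=
  ∑ k ∈ Finset.Icc j m₁, Polynomial.aeval z (A k) * wt μ e j k z

/-- The linear forms with negative index:
`𝒜_{n,-j-1}(z) = ∫ 𝒜_{n,-j}(x) dσ²_j(x) / (z - x)`. -/
def linFormNeg (μ : ℕ → Measure ℝ) (e : ℕ → ℝ) (F : ℂ → ℂ) : ℕ → ℂ → ℂ
  | 0 => F
  | j + 1 => fun z => (e j : ℂ) * ∫ x, linFormNeg μ e F j (x : ℂ) / (z - (x : ℂ)) ∂(μ j)

/-- A Nikishin system `N(σ_0,…,σ_m)` of measures of constant sign `σ_j = (e j) • (μ j)`,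
with `Co(supp σ_j) = Δ_j = [a j, b j]` and `Δ_j ∩ Δ_{j+1} = ∅`. -/
structure NikSys (m : ℕ) where
  μ : ℕ → Measure ℝ
  e : ℕ → ℝ
  a : ℕ → ℝ
  b : ℕ → ℝ
  fin : ∀ j, IsFiniteMeasure (μ j)
  sgn : ∀ j, e j = 1 ∨ e j = -1
  hull : ∀ j ≤ m, convexHull ℝ (msupport (μ j)) = Set.Icc (a j) (b j)
  inf : ∀ j ≤ m, (msupport (μ j)).Infinite
  disj : ∀ j < m, Set.Icc (a j) (b j) ∩ Set.Icc (a (j + 1)) (b (j + 1)) = ∅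

/-- Decreasing multi-index (the class `ℤ₊^{m+1}(•)`). -/
def Decr (m : ℕ) (n : ℕ → ℕ) : Prop := ∀ j < m, n (j + 1) ≤ n j

/-- `|n| = n_0 + ⋯ + n_m`. -/
def msum (m : ℕ) (n : ℕ → ℕ) : ℕ := ∑ j ∈ Finset.range (m + 1), n j

/-- `N_{1,j} = n_j + ⋯ + n_m` (partial tail sums). -/
def tailSum (m : ℕ) (n : ℕ → ℕ) (j : ℕ) : ℕ := ∑ k ∈ Finset.Icc j m, n k

/-- Mixed type multiple orthogonal polynomials relative to `(n1;n2)` and `(S1,S2)`. -/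
def IsMOP (m₁ m₂ : ℕ) (S1 : NikSys m₁) (S2 : NikSys m₂)
    (n1 n2 : ℕ → ℕ) (A : ℕ → Polynomial ℝ) : Prop :=
  (∀ j ≤ m₁, (A j).degree < (n1 j : WithBot ℕ)) ∧
  (∃ j ≤ m₁, A j ≠ 0) ∧
  ∀ k ≤ m₂, ∀ ν < n2 k,
    sInt S2.μ S2.e 0 k (fun x => (x : ℂ) ^ ν * linForm S1.μ S1.e m₁ 0 A (x : ℂ)) = 0

/-- The "monic" normalization: the last entry different from zero has leading
coefficient `1`. -/
def MonicLast (m₁ : ℕ) (A : ℕ → Polynomial ℝ) : Prop :=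
  ∃ j ≤ m₁, (A j).Monic ∧ ∀ k, j < k → k ≤ m₁ → A k = 0

/-- `n^l`: increase the `l`-th component by one. -/
def bump (l : ℕ) (n : ℕ → ℕ) : ℕ → ℕ := fun j => if j = l then n j + 1 else n j


/-!
If the moments `∫ xⁱ f dμ` vanish for `i < ν`, then `t * f x / (t - x) = x * f x / (t - x) + f x`
shows inductively that multiplication by `t ^ ν` can be moved inside the Cauchy transform of
`f dμ`. Fubini and the antisymmetry of the kernel `1 / (t - x)` then move the transform from `f`
onto the weight of the next measure, where it turns `ŝ_{j+2,k}` into `ŝ_{j+1,k}`. So the relation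
at level `j + 1` is minus the relation at level `j` with the same `k` and `ν`. The vanishing
moments of `A_{n,-j} dσ_j` are the case `k = j` of the relations at level `j`, and there are
enough of them because `n_{2,k} ≤ n_{2,j}`.
-/

section CauchyTransform

variable {μ l : Measure ℝ} {K L : Set ℝ}

/-- The Cauchy transform `z ↦ ∫ f(x) dμ(x) / (z - x)` of the complex measure `f dμ`, with the
Bochner convention that it is `0` at points where the integrand is not integrable. -/
def cauchyTransform (μ : Measure ℝ) (f : ℝ → ℂ) (z : ℂ) : ℂ :=
  ∫ x, f x / (z - (x : ℂ)) ∂μ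

theorem exists_norm_inv_sub_le_of_areSeparated (hKL : Metric.AreSeparated K L) :
    ∃ C : ℝ, ∀ t ∈ K, ∀ x ∈ L, ‖((t : ℂ) - (x : ℂ))⁻¹‖ ≤ C := by
  obtain ⟨r, hr, hle⟩ := hKL
  -- The separation `r` may be `∞`, whose `toReal` is `0`; hence the truncation at `1`.
  refine ⟨(min r 1).toReal⁻¹, fun t ht x hx => ?_⟩
  have hdist : (min r 1).toReal ≤ dist t x := by
    rw [dist_edist]
    exact ENNReal.toReal_mono (edist_ne_top t x) ((min_le_left r 1).trans (hle t ht x hx))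
  have hpos : 0 < (min r 1).toReal := ENNReal.toReal_pos (by simp [hr]) (by simp)
  rw [norm_inv, ← Complex.ofReal_sub, Complex.norm_real, ← dist_eq_norm]
  gcongr

theorem integrable_div_sub_of_areSeparated {α : Type*} [MeasurableSpace α] {ρ : Measure α}
    {g : α → ℂ} {u v : α → ℝ} (hKL : Metric.AreSeparated K L) (hg : Integrable g ρ)
    (hu : AEMeasurable u ρ) (hv : AEMeasurable v ρ)
    (huK : ∀ᵐ p ∂ρ, u p ∈ K) (hvL : ∀ᵐ p ∂ρ, v p ∈ L) :
    Integrable (fun p => g p / ((u p : ℂ) - (v p : ℂ))) ρ := by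
  obtain ⟨C, hC⟩ := exists_norm_inv_sub_le_of_areSeparated hKL
  simp only [div_eq_mul_inv]
  refine hg.mul_bdd (c := C) (by fun_prop) ?_
  filter_upwards [huK, hvL] with p hp hp' using hC _ hp _ hp'

theorem integrable_prod_div_sub_of_areSeparated [SFinite μ] {g : ℝ × ℝ → ℂ}
    (hKL : Metric.AreSeparated K L) (hl : ∀ᵐ t ∂l, t ∈ K) (hμ : ∀ᵐ x ∂μ, x ∈ L)
    (hg : Integrable g (l.prod μ)) :
    Integrable (fun p : ℝ × ℝ => g p / ((p.1 : ℂ) - (p.2 : ℂ))) (l.prod μ) :=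
  integrable_div_sub_of_areSeparated hKL hg measurable_fst.aemeasurable measurable_snd.aemeasurable
    (Measure.quasiMeasurePreserving_fst.ae hl) (Measure.quasiMeasurePreserving_snd.ae hμ)

theorem integrable_cauchyTransform [SFinite μ] [IsFiniteMeasure l] {f : ℝ → ℂ}
    (hKL : Metric.AreSeparated K L) (hl : ∀ᵐ t ∂l, t ∈ K) (hμ : ∀ᵐ x ∂μ, x ∈ L)
    (hf : Integrable f μ) : Integrable (fun t : ℝ => cauchyTransform μ f t) l :=
  (integrable_prod_div_sub_of_areSeparated hKL hl hμ (hf.comp_snd l)).integral_prod_left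

theorem cauchyTransform_ofReal_mul {f : ℝ → ℂ} (hKL : Metric.AreSeparated K L)
    (hμ : ∀ᵐ x ∂μ, x ∈ L) {t : ℝ} (ht : t ∈ K) (hf : Integrable f μ) :
    cauchyTransform μ (fun x => (x : ℂ) * f x) t = t * cauchyTransform μ f t - ∫ x, f x ∂μ := by
  have hdiv : Integrable (fun x => f x / ((t : ℂ) - (x : ℂ))) μ :=
    integrable_div_sub_of_areSeparated hKL hf aemeasurable_const aemeasurable_id
      (.of_forall fun _ => ht) hμ
  rw [cauchyTransform, cauchyTransform, ← integral_const_mul, ← integral_sub (hdiv.const_mul _) hf]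
  refine integral_congr_ae ?_
  filter_upwards [hμ] with x hx
  have hne : (t : ℂ) - (x : ℂ) ≠ 0 :=
    sub_ne_zero.2 (Complex.ofReal_injective.ne (hKL.disjoint.ne_of_mem ht hx))
  field_simp
  ring

theorem cauchyTransform_pow_mul {f : ℝ → ℂ} (hKL : Metric.AreSeparated K L)
    (hμ : ∀ᵐ x ∂μ, x ∈ L) {t : ℝ} (ht : t ∈ K) {ν : ℕ}
    (hf : ∀ i < ν, Integrable (fun x : ℝ => (x : ℂ) ^ i * f x) μ)
    (hzero : ∀ i < ν, ∫ x, (x : ℂ) ^ i * f x ∂μ = 0) :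
    cauchyTransform μ (fun x => (x : ℂ) ^ ν * f x) t = (t : ℂ) ^ ν * cauchyTransform μ f t := by
  induction ν with
  | zero => simp
  | succ ν ih =>
    have hstep := cauchyTransform_ofReal_mul hKL hμ ht (hf ν ν.lt_succ_self)
    rw [hzero ν ν.lt_succ_self, sub_zero,
      ih (fun i hi => hf i (hi.trans ν.lt_succ_self))
        (fun i hi => hzero i (hi.trans ν.lt_succ_self))] at hstep
    simpa only [pow_succ', mul_assoc] using hstep

theorem integral_cauchyTransform_mul [SFinite μ] [SFinite l] {f w : ℝ → ℂ}
    (hKL : Metric.AreSeparated K L) (hl : ∀ᵐ t ∂l, t ∈ K) (hμ : ∀ᵐ x ∂μ, x ∈ L)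
    (hf : Integrable f μ) (hw : Integrable w l) :
    ∫ t, cauchyTransform μ f t * w t ∂l = -∫ x, f x * cauchyTransform l w x ∂μ := by
  have hprod : Integrable (fun p : ℝ × ℝ => w p.1 * f p.2 / ((p.1 : ℂ) - (p.2 : ℂ))) (l.prod μ) :=
    integrable_prod_div_sub_of_areSeparated hKL hl hμ (hw.mul_prod hf)
  calc ∫ t, cauchyTransform μ f t * w t ∂l
      = ∫ t, ∫ x, w t * f x / ((t : ℂ) - (x : ℂ)) ∂μ ∂l := by
        simp only [cauchyTransform, mul_comm _ (w _), ← integral_const_mul, mul_div_assoc]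
    _ = ∫ x, ∫ t, w t * f x / ((t : ℂ) - (x : ℂ)) ∂l ∂μ := integral_integral_swap hprod
    _ = -∫ x, f x * cauchyTransform l w x ∂μ := by
        simp only [cauchyTransform, ← integral_const_mul, ← integral_neg]
        congr! 4 with x
        rw [← neg_sub (x : ℂ), div_neg, mul_comm, mul_div_assoc]

theorem integral_pow_mul_cauchyTransform_mul [SFinite μ] [SFinite l] {f w : ℝ → ℂ}
    (hKL : Metric.AreSeparated K L) (hl : ∀ᵐ t ∂l, t ∈ K) (hμ : ∀ᵐ x ∂μ, x ∈ L) {ν : ℕ}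
    (hf : ∀ i ≤ ν, Integrable (fun x : ℝ => (x : ℂ) ^ i * f x) μ) (hw : Integrable w l)
    (hzero : ∀ i < ν, ∫ x, (x : ℂ) ^ i * f x ∂μ = 0) :
    ∫ t, (t : ℂ) ^ ν * cauchyTransform μ f t * w t ∂l
      = -∫ x, (x : ℂ) ^ ν * f x * cauchyTransform l w x ∂μ := by
  rw [← integral_cauchyTransform_mul hKL hl hμ (hf ν le_rfl) hw]
  refine integral_congr_ae ?_
  filter_upwards [hl] with t ht
  rw [cauchyTransform_pow_mul hKL hμ ht (fun i hi => hf i hi.le) hzero]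

end CauchyTransform

theorem integrable_continuousOn_mul_of_ae_mem_isCompact {X : Type*} [TopologicalSpace X]
    [T2Space X] [MeasurableSpace X] [OpensMeasurableSpace X] {R : Type*} [NormedRing R]
    [SecondCountableTopologyEither X R] {ρ : Measure X} {K : Set X} {f g : X → R}
    (hK : IsCompact K) (hρ : ∀ᵐ x ∂ρ, x ∈ K) (hg : ContinuousOn g K) (hf : Integrable f ρ) :
    Integrable (fun x => g x * f x) ρ := by
  rw [← Measure.restrict_eq_self_of_ae_mem hρ]
  exact hf.integrableOn.continuousOn_mul hg hK

theorem msupport_eq_support (μ : Measure ℝ) : msupport μ = μ.support := by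
  ext x
  simp only [Measure.support_eq_forall_isOpen, msupport, pos_iff_ne_zero, Set.mem_ofPred_eq]
  exact forall_congr' fun _ => imp.swap

theorem Decr.antitoneOn {m : ℕ} {n : ℕ → ℕ} (hn : Decr m n) : AntitoneOn n (Set.Iic m) :=
  antitoneOn_of_succ_le Set.ordConnected_Iic fun j _ _ hj => hn j hj

theorem wt_of_le (μ : ℕ → Measure ℝ) (e : ℕ → ℝ) {j k : ℕ} (hkj : k ≤ j) (z : ℂ) :
    wt μ e j k z = 1 :=
  if_neg hkj.not_gt

theorem wt_of_lt (μ : ℕ → Measure ℝ) (e : ℕ → ℝ) {j k : ℕ} (hjk : j < k) (z : ℂ) :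
    wt μ e j k z = e (j + 1) * cauchyTransform (μ (j + 1)) (fun t => wt μ e (j + 1) k t) z := by
  obtain ⟨_ | g, rfl⟩ := Nat.exists_eq_add_of_lt hjk
  · simp [wt, nikhat, cauchyTransform]
  · have hlen : j + (g + 1) + 1 - (j + 1) = g + 1 := by omega
    have hlen' : j + (g + 1) + 1 - (j + 1 + 1) = g := by omega
    have hlt : j + 1 < j + (g + 1) + 1 := by omega
    simp only [wt, if_pos hjk, if_pos hlt, hlen, hlen', nikhat, cauchyTransform]

namespace NikSys

variable {m : ℕ} (S : NikSys m)

instance (j : ℕ) : IsFiniteMeasure (S.μ j) := S.fin j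

theorem ofReal_e_ne_zero (j : ℕ) : (S.e j : ℂ) ≠ 0 := by
  rcases S.sgn j with h | h <;> simp [h]

theorem ae_mem_Icc {j : ℕ} (hj : j ≤ m) : ∀ᵐ x ∂S.μ j, x ∈ Set.Icc (S.a j) (S.b j) := by
  filter_upwards [Measure.support_mem_ae (μ := S.μ j)] with x hx
  rw [← S.hull j hj, msupport_eq_support]
  exact subset_convexHull ℝ _ hx

theorem areSeparated_Icc {j : ℕ} (hj : j < m) :
    Metric.AreSeparated (Set.Icc (S.a j) (S.b j)) (Set.Icc (S.a (j + 1)) (S.b (j + 1))) := by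
  obtain ⟨r, hr, hlt⟩ := Metric.exists_pos_forall_lt_edist isCompact_Icc isClosed_Icc
    (Set.disjoint_iff_inter_eq_empty.2 (S.disj j hj))
  exact ⟨r, by simpa using hr.ne', fun x hx y hy => (hlt x hx y hy).le⟩

theorem integrable_wt {j k : ℕ} (hj : j ≤ m) (hk : k ≤ m) :
    Integrable (fun x : ℝ => wt S.μ S.e j k x) (S.μ j) := by
  induction hj using Nat.decreasingInduction with
  | self => simp [wt_of_le _ _ hk]
  | of_succ j hj ih =>
    rcases lt_or_ge j k with hjk | hkj
    · simp only [wt_of_lt _ _ hjk]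
      exact (integrable_cauchyTransform (S.areSeparated_Icc hj) (S.ae_mem_Icc hj.le)
        (S.ae_mem_Icc hj) ih).const_mul _
    · simp [wt_of_le _ _ hkj]

theorem integrable_linForm (A : ℕ → Polynomial ℝ) :
    Integrable (fun x : ℝ => linForm S.μ S.e m 0 A x) (S.μ 0) :=
  integrable_finsetSum _ fun k hk => integrable_continuousOn_mul_of_ae_mem_isCompact
    isCompact_Icc (S.ae_mem_Icc m.zero_le)
    ((A k).continuous_aeval.comp Complex.continuous_ofReal).continuousOn
    (S.integrable_wt m.zero_le (Finset.mem_Icc.1 hk).2)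

variable {F : ℂ → ℂ}

theorem integrable_linFormNeg (hF : Integrable (fun x : ℝ => F x) (S.μ 0)) {j : ℕ} (hj : j ≤ m) :
    Integrable (fun x : ℝ => linFormNeg S.μ S.e F j x) (S.μ j) := by
  induction j with
  | zero => exact hF
  | succ j ih =>
    exact (integrable_cauchyTransform (S.areSeparated_Icc hj).symm (S.ae_mem_Icc hj)
      (S.ae_mem_Icc (Nat.le_of_succ_le hj)) (ih (Nat.le_of_succ_le hj))).const_mul _

theorem sInt_linFormNeg_succ (hF : Integrable (fun x : ℝ => F x) (S.μ 0)) {j k ν : ℕ}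
    (hjk : j < k) (hk : k ≤ m)
    (hzero : ∀ i < ν, sInt S.μ S.e j j (fun x => (x : ℂ) ^ i * linFormNeg S.μ S.e F j x) = 0) :
    sInt S.μ S.e (j + 1) k (fun x => (x : ℂ) ^ ν * linFormNeg S.μ S.e F (j + 1) x)
      = -sInt S.μ S.e j k (fun x => (x : ℂ) ^ ν * linFormNeg S.μ S.e F j x) := by
  have hj : j < m := hjk.trans_le hk
  have hmoment : ∀ i < ν, ∫ x, (x : ℂ) ^ i * linFormNeg S.μ S.e F j x ∂S.μ j = 0 := by
    simpa [sInt, wt_of_le, S.ofReal_e_ne_zero] using hzero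
  have hint (i : ℕ) :
      Integrable (fun x : ℝ => (x : ℂ) ^ i * linFormNeg S.μ S.e F j x) (S.μ j) :=
    integrable_continuousOn_mul_of_ae_mem_isCompact isCompact_Icc (S.ae_mem_Icc hj.le)
      (by fun_prop) (S.integrable_linFormNeg hF hj.le)
  have hswap := integral_pow_mul_cauchyTransform_mul (S.areSeparated_Icc hj).symm
    (S.ae_mem_Icc hj) (S.ae_mem_Icc hj.le) (fun i _ => hint i) (S.integrable_wt hj hk) hmoment
  calc sInt S.μ S.e (j + 1) k (fun x => (x : ℂ) ^ ν * linFormNeg S.μ S.e F (j + 1) x)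
      = S.e (j + 1) * (S.e j * ∫ t, (t : ℂ) ^ ν *
          cauchyTransform (S.μ j) (fun x => linFormNeg S.μ S.e F j x) t *
            wt S.μ S.e (j + 1) k t ∂S.μ (j + 1)) := by
        rw [sInt, ← integral_const_mul (S.e j : ℂ)]
        simp only [linFormNeg, cauchyTransform, mul_assoc, mul_left_comm (S.e j : ℂ)]
    _ = -sInt S.μ S.e j k (fun x => (x : ℂ) ^ ν * linFormNeg S.μ S.e F j x) := by
        simp only [hswap, sInt, wt_of_lt _ _ hjk, mul_left_comm _ (S.e (j + 1) : ℂ),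
          integral_const_mul, mul_neg]

end NikSys

theorem orthogonality_of_negative_forms_general {m : ℕ} (S : NikSys m) {n : ℕ → ℕ}
    (hn : Decr m n) {F : ℂ → ℂ} (hF : Integrable (fun x : ℝ => F x) (S.μ 0))
    (hzero : ∀ k ≤ m, ∀ ν < n k, sInt S.μ S.e 0 k (fun x => (x : ℂ) ^ ν * F x) = 0) :
    ∀ j ≤ m, ∀ k, j ≤ k → k ≤ m → ∀ ν < n k,
      sInt S.μ S.e j k (fun x => (x : ℂ) ^ ν * linFormNeg S.μ S.e F j x) = 0 := by
  intro j
  induction j with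
  | zero => exact fun _ k _ => hzero k
  | succ j ih =>
    intro hj k hjk hk ν hν
    have hjm : j ≤ m := Nat.le_of_succ_le hj
    have hmono : n k ≤ n j := hn.antitoneOn hjm hk (Nat.le_of_succ_le hjk)
    rw [S.sInt_linFormNeg_succ hF hjk hk fun i hi =>
        ih hjm j le_rfl hjm i (hi.trans (hν.trans_le hmono)),
      ih hjm k (Nat.le_of_succ_le hjk) hk ν hν, neg_zero]

/-- Orthogonality relations of the negative-index forms:
`∫ x^ν 𝒜_{n,-j}(x) d s²_{j,k}(x) = 0` for `k = j,…,m₂` and `ν < n_{2,k}`. -/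
theorem orthogonality_of_negative_forms
    (m₁ m₂ : ℕ) (S1 : NikSys m₁) (S2 : NikSys m₂)
    (hbase : S1.μ 0 = S2.μ 0 ∧ S1.e 0 = S2.e 0)
    (n1 n2 : ℕ → ℕ) (h1 : Decr m₁ n1) (h2 : Decr m₂ n2)
    (hsum : msum m₂ n2 + 1 = msum m₁ n1) (hlast : 1 ≤ n1 m₁)
    (A : ℕ → Polynomial ℝ)
    (hA : IsMOP m₁ m₂ S1 S2 n1 n2 A) (hAm : MonicLast m₁ A) :
    ∀ j ≤ m₂, ∀ k, j ≤ k → k ≤ m₂ → ∀ ν < n2 k,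
      sInt S2.μ S2.e j k (fun x => (x : ℂ) ^ ν *
        linFormNeg S2.μ S2.e (linForm S1.μ S1.e m₁ 0 A) j (x : ℂ)) = 0 := by
  exact orthogonality_of_negative_forms_general S2 h2 (hbase.1 ▸ S1.integrable_linForm A) hA.2.2

end
end

section
/- Let n and n^l both lie in ℤ₊^{m₁+1}(•) × ℤ₊^{m₂+1}(•) with n_{1,m₁} ≥ 1, let A,B ∈ ℝ with |A| + |B| > 0, and set G_{n,j} = A·A_{n,j} + B·A_{n^l,j}. Then for every j ∈ {0,…,m₁} with n_{1,j} ≥ 2, the polynomial A·a_{n,j} + B·a_{n^l,j} has degree ≥ n_{1,j} − 2, and G_{n,j} is not identically zero. -/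
open MeasureTheory Polynomial Set Filter

noncomputable section

/- A form `∑ g_k ŝ_{1,k}` with `deg g_k < N_k` which vanishes at `N_0 + ⋯ + N_m` points off `Δ_1`
is zero as soon as `N` is decreasing up to one lowered entry. Replace the outermost integral by an
exact quadrature, so that everything becomes rational in `x`; orthogonality then yields a form with
one generator fewer which has enough zeros on `Δ_1`, and one inducts. When `N_0 < N_1`, first divide
by `ŝ_{1,1}`: the inversion formula `1 / ŝ_{1,1}(x) = α x + β + τ̂(x)` gives a form of the same kind
in which the second entry has moved to the front.

Orthogonality produces `|n₂|` zeros of `A·𝒜_{n,0} + B·𝒜_{n^l,0}` on `Δ_0`. If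
`deg (A·a_{n,j} + B·a_{n^l,j}) < n_{1,j} - 2`, then its coefficients have at most `|n₂|` degrees of
freedom, so they all vanish; but then `a_{n^l}` is proportional to `a_n`, and its `|n₂| + 1 = |n₁|`
zeros force it to be zero. -/

/-- `f` is everywhere positive or everywhere negative on `J`. -/
def HasConstSign {α : Type*} (J : Set α) (f : α → ℝ) : Prop := ∀ x ∈ J, ∀ y ∈ J, 0 < f x * f y

namespace HasConstSign

variable {α : Type*} {J K : Set α} {f g : α → ℝ}

lemma mono (hf : HasConstSign J f) (hKJ : K ⊆ J) : HasConstSign K f :=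
  fun x hx y hy => hf x (hKJ hx) y (hKJ hy)

lemma ne_zero (hf : HasConstSign J f) {x : α} (hx : x ∈ J) : f x ≠ 0 :=
  left_ne_zero_of_mul (hf x hx x hx).ne'

lemma congr (hf : HasConstSign J f) (h : EqOn f g J) : HasConstSign J g :=
  fun x hx y hy => h hx ▸ h hy ▸ hf x hx y hy

lemma const {c : ℝ} (hc : c ≠ 0) : HasConstSign J fun _ => c :=
  fun _ _ _ _ => mul_self_pos.2 hc

lemma mul (hf : HasConstSign J f) (hg : HasConstSign J g) :
    HasConstSign J fun x => f x * g x := by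
  intro x hx y hy
  rw [mul_mul_mul_comm]
  exact mul_pos (hf x hx y hy) (hg x hx y hy)

lemma neg (hf : HasConstSign J f) : HasConstSign J fun x => -f x := fun x hx y hy =>
  (neg_mul_neg (f x) (f y)).symm ▸ hf x hx y hy

lemma inv (hf : HasConstSign J f) : HasConstSign J fun x => (f x)⁻¹ := fun x hx y hy => by
  rw [← mul_inv]
  exact inv_pos.2 (hf x hx y hy)

lemma sum_ne_zero {s : Finset α} (hf : HasConstSign (s : Set α) f) (hs : s.Nonempty) :
    ∑ x ∈ s, f x ≠ 0 := by
  obtain ⟨x, hx⟩ := hs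
  have : 0 < f x * ∑ y ∈ s, f y := by
    rw [Finset.mul_sum]
    exact Finset.sum_pos (hf x hx) ⟨x, hx⟩
  exact right_ne_zero_of_mul this.ne'

end HasConstSign

lemma hasConstSign_of_continuousOn {X : Type*} [TopologicalSpace X] {J : Set X} {f : X → ℝ}
    (hJ : IsPreconnected J) (hf : ContinuousOn f J)
    (h0 : ∀ x ∈ J, f x ≠ 0) : HasConstSign J f := by
  intro x hx y hy
  by_contra! hle
  obtain ⟨z, hz, hfz⟩ : (0 : ℝ) ∈ f '' J :=
    (hJ.image f hf).ordConnected.uIcc_subset (mem_image_of_mem f hx) (mem_image_of_mem f hy)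
      (mem_uIcc.2 ((mul_nonpos_iff.1 hle).symm.imp_right And.symm))
  exact h0 z hz hfz

lemma exists_finset_pos_of_mem_convexHull_image {α E : Type*} [AddCommGroup E]
    [Module ℝ E] [FiniteDimensional ℝ E] {f : α → E} {A : Set α} {x : E}
    (hx : x ∈ convexHull ℝ (f '' A)) :
    ∃ (s : Finset α) (w : α → ℝ), ↑s ⊆ A ∧ (∀ t ∈ s, 0 < w t) ∧ ∑ t ∈ s, w t = 1 ∧
      ∑ t ∈ s, w t • f t = x ∧ s.card ≤ Module.finrank ℝ E + 1 := by
  classical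
  obtain ⟨ι, _, z, w, hz, hind, hw, hw1, hwx⟩ := eq_pos_convex_span_of_mem_convexHull hx
  choose t htA htz using fun i => hz (mem_range_self i)
  have ht : Function.Injective t := fun i j hij => hind.injective (by rw [← htz, hij, htz])
  refine ⟨Finset.univ.map ⟨t, ht⟩, Function.extend t w 0, ?_, ?_, ?_, ?_, ?_⟩
  · simpa [Set.range_subset_iff] using htA
  · simpa [ht.extend_apply] using hw
  · simpa [ht.extend_apply] using hw1
  · simpa [ht.extend_apply, htz] using hwx
  · simpa using hind.card_le_finrank_succ.trans
      (Nat.succ_le_succ (Submodule.finrank_le _))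

/-- The family of functions `ψ v`, `v ∈ V`, is a Haar (Chebyshev) system on `J`: the functions are
continuous on `J`, and a nonzero `v` gives fewer than `dim V` zeros there. -/
structure IsHaar {V : Type*} [AddCommGroup V] [Module ℝ V] (ψ : V →ₗ[ℝ] ℝ → ℝ) (J : Set ℝ) :
    Prop where
  continuousOn : ∀ v, ContinuousOn (ψ v) J
  eq_zero_of_zeros : ∀ (v : V) (T : Finset ℝ), ↑T ⊆ J → Module.finrank ℝ V ≤ T.card →
    (∀ x ∈ T, ψ v x = 0) → v = 0

lemma IsHaar.mono {V : Type*} [AddCommGroup V] [Module ℝ V] {ψ : V →ₗ[ℝ] ℝ → ℝ} {J K : Set ℝ}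
    (hψ : IsHaar ψ J) (hKJ : K ⊆ J) : IsHaar ψ K where
  continuousOn v := (hψ.continuousOn v).mono hKJ
  eq_zero_of_zeros v T hT := hψ.eq_zero_of_zeros v T (hT.trans hKJ)

lemma exists_zeros_of_sign_changes {J : Set ℝ} (hJ : J.OrdConnected) {f : ℝ → ℝ}
    (hf : ContinuousOn f J) {T : Finset ℝ} (hT : ↑T ⊆ J) {K : ℕ} (hcard : T.card = K + 1)
    (halt : ∀ x ∈ T, ∀ y ∈ T, x < y → (∀ z ∈ T, z ∉ Ioo x y) → f x * f y < 0) :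
    ∃ Z : Finset ℝ, ↑Z ⊆ J ∧ Z.card = K ∧ ∀ z ∈ Z, f z = 0 := by
  set t := T.orderEmbOfFin hcard with ht
  have htT (i) : t i ∈ T := T.orderEmbOfFin_mem hcard i
  have hzero (i : Fin K) : ∃ z ∈ Ioo (t i.castSucc) (t i.succ), f z = 0 := by
    have hlt : t i.castSucc < t i.succ := t.lt_iff_lt.2 i.castSucc_lt_succ
    have hgap : ∀ z ∈ T, z ∉ Ioo (t i.castSucc) (t i.succ) := by
      intro z hz hzI
      obtain ⟨k, rfl⟩ : z ∈ range t := by rwa [ht, T.range_orderEmbOfFin hcard]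
      have h1 := t.lt_iff_lt.1 hzI.1
      have h2 := t.lt_iff_lt.1 hzI.2
      simp only [Fin.lt_def, Fin.val_castSucc, Fin.val_succ] at h1 h2
      omega
    have hneg := halt _ (htT _) _ (htT _) hlt hgap
    have hcont : ContinuousOn f (Icc (t i.castSucc) (t i.succ)) :=
      hf.mono (hJ.out (hT (htT _)) (hT (htT _)))
    rcases mul_neg_iff.1 hneg with ⟨hx, hy⟩ | ⟨hx, hy⟩
    · exact intermediate_value_Ioo' hlt.le hcont ⟨hy, hx⟩
    · exact intermediate_value_Ioo hlt.le hcont ⟨hx, hy⟩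
  choose z hzI hfz using hzero
  have hz : StrictMono z := fun i j hij =>
    ((hzI i).2.trans_le (t.le_iff_le.2 (Fin.succ_le_castSucc_iff.2 hij))).trans (hzI j).1
  refine ⟨Finset.univ.map ⟨z, hz.injective⟩, ?_, by simp, by simpa using hfz⟩
  simpa [Set.range_subset_iff] using fun i =>
    hJ.out (hT (htT _)) (hT (htT _)) (Ioo_subset_Icc_self (hzI i))

namespace IsHaar

variable {V : Type*} [AddCommGroup V] [Module ℝ V] [FiniteDimensional ℝ V]
  {ψ : V →ₗ[ℝ] ℝ → ℝ} {J : Set ℝ} {s T : Finset ℝ}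

lemma exists_interpolation (hψ : IsHaar ψ J) (hs : ↑s ⊆ J)
    (hcard : Module.finrank ℝ V ≤ s.card) (hTs : T ⊆ s) (hT : T.card ≤ Module.finrank ℝ V)
    (c : ℝ → ℝ) : ∃ v, ∀ x ∈ T, ψ v x = c x := by
  obtain ⟨u, hTu, hus, hu⟩ := Finset.exists_subsuperset_card_eq hTs hT hcard
  let restr : V →ₗ[ℝ] u → ℝ := LinearMap.funLeft ℝ ℝ ((↑) : u → ℝ) ∘ₗ ψ
  have hinj : Function.Injective restr := by
    rw [← LinearMap.ker_eq_bot, LinearMap.ker_eq_bot']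
    intro v hv
    exact hψ.eq_zero_of_zeros v u ((Finset.coe_subset.2 hus).trans hs) hu.ge
      fun x hx => congrFun hv ⟨x, hx⟩
  have hsurj := (LinearMap.injective_iff_surjective_of_finrank_eq_finrank (by simp [hu])).1 hinj
  obtain ⟨v, hv⟩ := hsurj fun x => c x
  exact ⟨v, fun x hx => congrFun hv ⟨x, hTu hx⟩⟩

lemma annihilator_eq_zero (hψ : IsHaar ψ J) (hs : ↑s ⊆ J)
    (hcard : Module.finrank ℝ V ≤ s.card) (hTs : T ⊆ s) (hT : T.card ≤ Module.finrank ℝ V)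
    {c : ℝ → ℝ} (hc : ∀ v, ∑ t ∈ T, c t * ψ v t = 0) {x : ℝ} (hx : x ∈ T) : c x = 0 := by
  obtain ⟨v, hv⟩ := hψ.exists_interpolation hs hcard hTs hT (Pi.single x 1)
  rw [← hc v, Finset.sum_eq_single_of_mem x hx, hv x hx, Pi.single_eq_same, mul_one]
  intro y hy hyx
  rw [hv y hy, Pi.single_eq_of_ne hyx, mul_zero]

lemma exists_hasConstSign_between (hψ : IsHaar ψ J) (hJ : J.OrdConnected) (hT : ↑T ⊆ J)
    (hcard : T.card = Module.finrank ℝ V + 1) {x y : ℝ} (hx : x ∈ T) (hy : y ∈ T) (hxy : x < y)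
    (hgap : ∀ z ∈ T, z ∉ Ioo x y) :
    ∃ v, HasConstSign (Icc x y) (ψ v) ∧ ∀ z ∈ (T.erase x).erase y, ψ v z = 0 := by
  have hyx : y ∈ T.erase x := Finset.mem_erase.2 ⟨hxy.ne', hy⟩
  set T' := (T.erase x).erase y with hT'
  have hT'T : T' ⊆ T := (Finset.erase_subset _ _).trans (Finset.erase_subset _ _)
  have hT'card : T'.card + 1 = Module.finrank ℝ V := by
    rw [Finset.card_erase_add_one hyx, Finset.card_erase_of_mem hx, hcard, Nat.add_sub_cancel]
  have hinsert {z : ℝ} (hz : z ∈ Icc x y) : (insert z T').card = Module.finrank ℝ V := by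
    rw [Finset.card_insert_of_notMem, hT'card]
    intro hzT'
    have := hgap z (hT'T hzT')
    simp only [hT', Finset.mem_erase] at hzT'
    exact this ⟨hz.1.lt_of_ne' hzT'.2.1, hz.2.lt_of_ne hzT'.1⟩
  obtain ⟨v, hv⟩ := hψ.exists_interpolation hT (by omega)
    (Finset.insert_subset hx hT'T) (hinsert (left_mem_Icc.2 hxy.le)).le (Pi.single x 1)
  have hvx : ψ v x = 1 := by simpa using hv x (Finset.mem_insert_self _ _)
  have hvT' : ∀ z ∈ T', ψ v z = 0 := by
    intro z hz
    rw [hv z (Finset.mem_insert_of_mem hz), Pi.single_eq_of_ne]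
    exact (Finset.mem_erase.1 (Finset.mem_of_mem_erase hz)).1
  have hIJ : Icc x y ⊆ J := hJ.out (hT hx) (hT hy)
  refine ⟨v, hasConstSign_of_continuousOn isPreconnected_Icc ((hψ.continuousOn v).mono hIJ)
    fun z hz hvz => ?_, hvT'⟩
  have hv0 : v = 0 := by
    refine hψ.eq_zero_of_zeros v (insert z T') ?_ (hinsert hz).ge ?_
    · rw [Finset.coe_insert]
      exact insert_subset (hIJ hz) ((Finset.coe_subset.2 hT'T).trans hT)
    · exact (Finset.forall_mem_insert _ _ _).2 ⟨hvz, hvT'⟩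
  simp [hv0] at hvx

lemma annihilator_mul_neg (hψ : IsHaar ψ J) (hJ : J.OrdConnected) (hT : ↑T ⊆ J)
    (hcard : T.card = Module.finrank ℝ V + 1) {c : ℝ → ℝ}
    (hc : ∀ v, ∑ t ∈ T, c t * ψ v t = 0) {x y : ℝ} (hx : x ∈ T) (hy : y ∈ T) (hxy : x < y)
    (hgap : ∀ z ∈ T, z ∉ Ioo x y) (hcx : c x ≠ 0) : c x * c y < 0 := by
  obtain ⟨v, hsign, hv⟩ := hψ.exists_hasConstSign_between hJ hT hcard hx hy hxy hgap
  have hpos := hsign x (left_mem_Icc.2 hxy.le) y (right_mem_Icc.2 hxy.le)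
  have hsum : c x * ψ v x + c y * ψ v y = 0 := by
    rw [← hc v, ← Finset.add_sum_erase _ _ hx,
      ← Finset.add_sum_erase _ _ (Finset.mem_erase.2 ⟨hxy.ne', hy⟩),
      Finset.sum_eq_zero fun z hz => by rw [hv z hz, mul_zero], add_zero]
  have : c x * c y * (ψ v x * ψ v y) < 0 :=
    calc c x * c y * (ψ v x * ψ v y) = c x * ψ v x * (c y * ψ v y) := by ring
      _ = -(c x * ψ v x) ^ 2 := by rw [← neg_eq_of_add_eq_zero_right hsum]; ring
      _ < 0 := neg_neg_of_pos
        (sq_pos_of_ne_zero (mul_ne_zero hcx (left_ne_zero_of_mul hpos.ne')))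
  exact neg_of_mul_neg_left this hpos.le

/-- Carathéodory's theorem, applied to the functionals `v ↦ c t * ψ v t` in the dual of `V`. -/
lemma exists_minimal_annihilator (hψ : IsHaar ψ J) (hs : ↑s ⊆ J)
    (hcard : Module.finrank ℝ V ≤ s.card) {c : ℝ → ℝ}
    (hc : ∀ v, ∑ t ∈ s, c t * ψ v t = 0) {x : ℝ} (hx : x ∈ s) (hcx : c x ≠ 0) :
    ∃ (T : Finset ℝ) (c' : ℝ → ℝ), T ⊆ s ∧ T.card = Module.finrank ℝ V + 1 ∧
      (∀ t ∈ T, 0 < c' t * c t) ∧ ∀ v, ∑ t ∈ T, c' t * ψ v t = 0 := by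
  let ev (t : ℝ) : Module.Dual ℝ V := c t • (LinearMap.proj t ∘ₗ ψ)
  set A := s.filter (c · ≠ 0) with hA
  have hmem : (0 : Module.Dual ℝ V) ∈ convexHull ℝ (ev '' A) := by
    have hmass : A.centerMass (fun _ => (1 : ℝ)) ev = 0 := by
      have : ∑ t ∈ A, ev t = 0 := by
        ext v
        rw [hA, Finset.sum_filter_of_ne (p := (c · ≠ 0)) fun t _ => mt fun h0 => by simp [ev, h0]]
        simpa [ev] using hc v
      simp [Finset.centerMass, this]
    rw [← hmass]
    refine A.centerMass_mem_convexHull (fun _ _ => zero_le_one) ?_ fun t => mem_image_of_mem ev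
    simpa using ⟨x, Finset.mem_filter.2 ⟨hx, hcx⟩⟩
  obtain ⟨T, w, hTA, hw, hw1, hw0, hTcard⟩ := exists_finset_pos_of_mem_convexHull_image hmem
  have hTs : T ⊆ s := (Finset.coe_subset.1 hTA).trans (Finset.filter_subset _ _)
  have hcT (t) (ht : t ∈ T) : c t ≠ 0 := (Finset.mem_filter.1 (hTA ht)).2
  have hann (v) : ∑ t ∈ T, (w t * c t) * ψ v t = 0 := by
    simpa [ev, mul_assoc] using LinearMap.congr_fun hw0 v
  refine ⟨T, fun t => w t * c t, hTs, ?_, fun t ht => ?_, hann⟩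
  · refine (Subspace.dual_finrank_eq (K := ℝ) (V := V) ▸ hTcard).antisymm ?_
    by_contra! hlt
    have hT : T.Nonempty := Finset.nonempty_of_sum_ne_zero (hw1 ▸ one_ne_zero)
    obtain ⟨t, ht⟩ := hT
    exact mul_ne_zero (hw t ht).ne' (hcT t ht)
      (hψ.annihilator_eq_zero hs hcard hTs (Nat.lt_succ_iff.1 hlt) hann ht)
  · rw [mul_assoc]
    exact mul_pos (hw t ht) (mul_self_pos.2 (hcT t ht))

theorem exists_zeros (hψ : IsHaar ψ J) (hJ : J.OrdConnected) (hs : ↑s ⊆ J)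
    (hcard : Module.finrank ℝ V ≤ s.card) {w f : ℝ → ℝ} (hw : HasConstSign (s : Set ℝ) w)
    (hf : ContinuousOn f J) (h : ∀ v, ∑ t ∈ s, w t * f t * ψ v t = 0) :
    ∃ Z : Finset ℝ, ↑Z ⊆ J ∧ Z.card = Module.finrank ℝ V ∧ ∀ z ∈ Z, f z = 0 := by
  by_cases hf0 : ∀ t ∈ s, f t = 0
  · obtain ⟨Z, hZs, hZ⟩ := Finset.exists_subset_card_eq hcard
    exact ⟨Z, (Finset.coe_subset.2 hZs).trans hs, hZ, fun z hz => hf0 z (hZs hz)⟩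
  push Not at hf0
  obtain ⟨x, hx, hfx⟩ := hf0
  obtain ⟨T, c, hTs, hTcard, hsign, hc⟩ := hψ.exists_minimal_annihilator hs hcard h hx
    (mul_ne_zero (hw.ne_zero hx) hfx)
  have hTJ : ↑T ⊆ J := (Finset.coe_subset.2 hTs).trans hs
  refine exists_zeros_of_sign_changes hJ hf hTJ hTcard fun x hx y hy hxy hgap => ?_
  have hcc := hψ.annihilator_mul_neg hJ hTJ hTcard hc hx hy hxy hgap
    (left_ne_zero_of_mul (hsign x hx).ne')
  have hcf : 0 < (c x * c y) * (w x * w y) * (f x * f y) :=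
    (mul_pos (hsign x hx) (hsign y hy)).trans_eq (by ring)
  exact (neg_iff_neg_of_mul_pos hcf).1 (mul_neg_of_neg_of_pos hcc (hw x (hTs hx) y (hTs hy)))

end IsHaar

section Polynomials

open Lagrange

/-- Evaluation of the polynomials of degree less than `K`, as a linear family of functions. -/
def polyEval (K : ℕ) : degreeLT ℝ K →ₗ[ℝ] ℝ → ℝ :=
  LinearMap.pi leval ∘ₗ (degreeLT ℝ K).subtype

lemma finrank_degreeLT (K : ℕ) : Module.finrank ℝ (degreeLT ℝ K) = K := by
  simp [(degreeLTEquiv ℝ K).finrank_eq]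

instance finiteDimensional_degreeLT (K : ℕ) : FiniteDimensional ℝ (degreeLT ℝ K) :=
  (degreeLTEquiv ℝ K).symm.finiteDimensional

lemma isHaar_polyEval (K : ℕ) (J : Set ℝ) : IsHaar (polyEval K) J where
  continuousOn p := (p : ℝ[X]).continuousOn
  eq_zero_of_zeros p T _ hT hp := by
    rw [finrank_degreeLT] at hT
    refine Subtype.ext (eq_zero_of_degree_lt_of_eval_finset_eq_zero T ?_ hp)
    exact (mem_degreeLT.1 p.2).trans_le (by exact_mod_cast hT)

lemma exists_zeros_of_orthogonal_polynomials {Δ : Set ℝ} (hΔ : Δ.OrdConnected) {s : Finset ℝ}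
    (hs : ↑s ⊆ Δ) {K : ℕ} (hK : K ≤ s.card) {w f : ℝ → ℝ} (hw : HasConstSign (s : Set ℝ) w)
    (hf : ContinuousOn f Δ) (h : ∀ p : ℝ[X], p.degree < K → ∑ t ∈ s, w t * f t * p.eval t = 0) :
    ∃ Z : Finset ℝ, ↑Z ⊆ Δ ∧ Z.card = K ∧ ∀ z ∈ Z, f z = 0 := by
  simpa only [finrank_degreeLT] using (isHaar_polyEval K Δ).exists_zeros hΔ hs
    (by rwa [finrank_degreeLT]) hw hf fun p => h p (mem_degreeLT.1 p.2)

lemma degree_mul_lt_of_degree_lt {p q : ℝ[X]} {a b : ℕ} (hp : p.degree < a) (hq : q.degree < b) :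
    (p * q).degree < (a + b - 1 : ℕ) := by
  rcases eq_or_ne p 0 with rfl | hp0
  · simp
  rcases eq_or_ne q 0 with rfl | hq0
  · simp
  rw [degree_eq_natDegree hp0, Nat.cast_lt] at hp
  rw [degree_eq_natDegree hq0, Nat.cast_lt] at hq
  rw [degree_mul, degree_eq_natDegree hp0, degree_eq_natDegree hq0]
  norm_cast
  omega

variable {s T Z : Finset ℝ} {p q : ℝ[X]}

lemma sum_nodalWeight_mul_eval (hp : p.degree < T.card) :
    ∑ x ∈ T, nodalWeight T id x * p.eval x = p.coeff (T.card - 1) := by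
  rw [coeff_eq_sum (v := id) (injOn_id _) hp]
  refine Finset.sum_congr rfl fun x _ => ?_
  rw [nodalWeight, Finset.prod_inv_distrib, div_eq_inv_mul, id]

lemma sum_nodalWeight_mul_eval_div (hp : p.degree < T.card) {y : ℝ} (hy : y ∉ T) :
    ∑ x ∈ T, nodalWeight T id x * p.eval x / (y - x) = p.eval y / (nodal T id).eval y := by
  have hne : ∀ x ∈ T, y ≠ id x := fun x hx hyx => hy (hyx ▸ hx)
  rw [eq_div_iff (eval_nodal_not_at_node hne), mul_comm]
  conv_rhs => rw [eq_interpolate (v := id) (injOn_id _) hp, eval_interpolate_not_at_node _ hne]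
  congr 1
  exact Finset.sum_congr rfl fun x _ => by simp only [id]; ring

/-- The Cauchy transform of the discrete measure with masses `w t` at the nodes `t ∈ s`. -/
def cauchySum (s : Finset ℝ) (w : ℝ → ℝ) (x : ℝ) : ℝ := ∑ t ∈ s, w t / (x - t)

/-- Multiplying the relation by a polynomial `p` and by the divided-difference weights of `T` kills
the polynomial part and replaces every kernel `1 / (x - y)` by `-1 / ∏ (y - x)`. -/
lemma sum_div_nodal_eq_zero {ι : Type*} {I : Finset ι} (hsT : Disjoint s T) {w : ℝ → ℝ}
    {ω : ι → ℝ → ℝ} {P : ℝ[X]} {h : ι → ℝ[X]} {d K : ℕ} (hP : P.degree < d)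
    (hh : ∀ k ∈ I, (h k).degree < (d + 1 : ℕ)) (hT : K + d ≤ T.card)
    (hzero : ∀ x ∈ T, P.eval x + ∑ k ∈ I, (h k).eval x * cauchySum s (fun y => w y * ω k y) x = 0)
    (hp : p.degree < K) :
    ∑ y ∈ s, w y / (nodal T id).eval y * (∑ k ∈ I, (h k).eval y * ω k y) * p.eval y = 0 := by
  have hPsum : ∑ x ∈ T, nodalWeight T id x * (p * P).eval x = 0 := by
    have hdeg := degree_mul_lt_of_degree_lt hp hP
    rw [sum_nodalWeight_mul_eval, coeff_eq_zero_of_degree_lt]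
    all_goals exact hdeg.trans_le (by exact_mod_cast (by omega))
  have hsum (y) (hy : y ∈ s) (k) (hk : k ∈ I) :
      ∑ x ∈ T, nodalWeight T id x * (p * h k).eval x / (y - x) =
        (p * h k).eval y / (nodal T id).eval y := by
    refine sum_nodalWeight_mul_eval_div ?_ (Finset.disjoint_left.1 hsT hy)
    exact (degree_mul_lt_of_degree_lt hp (hh k hk)).trans_le (by exact_mod_cast hT)
  calc ∑ y ∈ s, w y / (nodal T id).eval y * (∑ k ∈ I, (h k).eval y * ω k y) * p.eval y
      = ∑ y ∈ s, ∑ k ∈ I, w y * ω k y * ((p * h k).eval y / (nodal T id).eval y) := by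
        refine Finset.sum_congr rfl fun y _ => ?_
        rw [Finset.mul_sum, Finset.sum_mul]
        exact Finset.sum_congr rfl fun k _ => by rw [eval_mul]; ring
    _ = ∑ y ∈ s, ∑ k ∈ I, w y * ω k y *
          ∑ x ∈ T, nodalWeight T id x * (p * h k).eval x / (y - x) :=
        Finset.sum_congr rfl fun y hy => Finset.sum_congr rfl fun k hk => by rw [hsum y hy k hk]
    _ = -∑ x ∈ T, nodalWeight T id x * p.eval x *
          ∑ k ∈ I, (h k).eval x * cauchySum s (fun y => w y * ω k y) x := by
        simp only [cauchySum, Finset.mul_sum, ← Finset.sum_neg_distrib]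
        rw [Finset.sum_congr rfl fun y _ => Finset.sum_comm, Finset.sum_comm]
        refine Finset.sum_congr rfl fun x _ => Finset.sum_comm.trans ?_
        refine Finset.sum_congr rfl fun k _ => Finset.sum_congr rfl fun y _ => ?_
        rw [eval_mul, ← neg_sub x y, div_neg]
        ring
    _ = ∑ x ∈ T, nodalWeight T id x * (p * P).eval x := by
        rw [← Finset.sum_neg_distrib]
        refine Finset.sum_congr rfl fun x hx => ?_
        rw [eval_mul]
        linear_combination -(nodalWeight T id x * p.eval x) * hzero x hx
    _ = 0 := hPsum

theorem exists_zeros_of_cauchySum_zeros {Δ : Set ℝ} (hΔ : Δ.OrdConnected) (hs : ↑s ⊆ Δ)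
    (hT : Disjoint (T : Set ℝ) Δ) {w : ℝ → ℝ} (hw : HasConstSign (s : Set ℝ) w) {ι : Type*}
    {I : Finset ι} {ω : ι → ℝ → ℝ} (hω : ∀ k ∈ I, ContinuousOn (ω k) Δ) {P : ℝ[X]}
    {h : ι → ℝ[X]} {d K : ℕ} (hP : P.degree < d) (hh : ∀ k ∈ I, (h k).degree < (d + 1 : ℕ))
    (hKs : K ≤ s.card) (hKT : K + d ≤ T.card)
    (hzero : ∀ x ∈ T,
      P.eval x + ∑ k ∈ I, (h k).eval x * cauchySum s (fun y => w y * ω k y) x = 0) :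
    ∃ Z : Finset ℝ, ↑Z ⊆ Δ ∧ Z.card = K ∧ ∀ z ∈ Z, ∑ k ∈ I, (h k).eval z * ω k z = 0 := by
  have hsT : Disjoint s T := Finset.disjoint_coe.1 (hT.symm.mono_left hs)
  have hnodal : HasConstSign Δ fun y => (nodal T id).eval y :=
    hasConstSign_of_continuousOn hΔ.isPreconnected (nodal T id).continuousOn fun y hy =>
      eval_nodal_not_at_node fun x hx => ne_of_mem_of_not_mem hy (hT.notMem_of_mem_left hx)
  refine exists_zeros_of_orthogonal_polynomials hΔ hs hKs (hw.mul (hnodal.mono hs).inv)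
    (continuousOn_finsetSum I fun k hk => (h k).continuousOn.mul (hω k hk)) fun p hp => ?_
  exact sum_div_nodal_eq_zero hsT hP hh hKT hzero hp

end Polynomials

lemma HasConstSign.sum_mul {α β : Type*} {J : Set β} {s : Finset α} {w : α → ℝ}
    (hw : HasConstSign (s : Set α) w) (hs : s.Nonempty) {p : β → α → ℝ}
    (hp : ∀ x ∈ J, ∀ t ∈ s, 0 < p x t) : HasConstSign J fun x => ∑ t ∈ s, w t * p x t := by
  intro x hx y hy
  rw [Finset.sum_mul_sum]
  refine Finset.sum_pos (fun t ht => Finset.sum_pos (fun u hu => ?_) hs) hs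
  rw [mul_mul_mul_comm]
  exact mul_pos (hw t ht u hu) (mul_pos (hp x hx t ht) (hp y hy u hu))

section CauchySum

open Lagrange Topology

variable {Δ : Set ℝ} {s Z : Finset ℝ} {w v : ℝ → ℝ}

lemma cauchySum_ne_zero (hΔ : Δ.OrdConnected) (hs : ↑s ⊆ Δ) (hne : s.Nonempty)
    (hw : HasConstSign (s : Set ℝ) w) {x : ℝ} (hx : x ∉ Δ) : cauchySum s w x ≠ 0 := by
  refine HasConstSign.sum_ne_zero (hw.mul (HasConstSign.inv (HasConstSign.mono ?_ hs))) hne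
  exact hasConstSign_of_continuousOn hΔ.isPreconnected (by fun_prop)
    fun t ht => sub_ne_zero.2 (ne_of_mem_of_not_mem ht hx).symm

lemma continuousOn_cauchySum (hs : ↑s ⊆ Δ) : ContinuousOn (cauchySum s w) Δᶜ :=
  continuousOn_finsetSum _ fun t ht => continuousOn_const.div (by fun_prop)
    fun _ hx => sub_ne_zero.2 (ne_of_mem_of_not_mem (hs ht) hx).symm

/-- The numerator of `cauchySum s w` over the common denominator `∏ (X - t)`, `t ∈ s`. -/
def cauchyNumerator (s : Finset ℝ) (w : ℝ → ℝ) : ℝ[X] := ∑ t ∈ s, C (w t) * nodal (s.erase t) id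

lemma eval_cauchyNumerator {x : ℝ} (hx : x ∉ s) :
    (cauchyNumerator s w).eval x = cauchySum s w x * (nodal s id).eval x := by
  rw [cauchyNumerator, eval_finsetSum, cauchySum, Finset.sum_mul]
  refine Finset.sum_congr rfl fun t ht => ?_
  have : x - t ≠ 0 := sub_ne_zero.2 (ne_of_mem_of_not_mem ht hx).symm
  rw [nodal_eq_mul_nodal_erase ht]
  simp only [eval_mul, eval_C, eval_sub, eval_X, id]
  field_simp

lemma eval_cauchyNumerator_node {t : ℝ} (ht : t ∈ s) :
    (cauchyNumerator s w).eval t = w t * (nodal (s.erase t) id).eval t := by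
  rw [cauchyNumerator, eval_finsetSum, Finset.sum_eq_single_of_mem t ht, eval_mul, eval_C]
  intro u _ hut
  have : (nodal (s.erase u) id).eval (id t) = 0 :=
    eval_nodal_at_node (Finset.mem_erase.2 ⟨hut.symm, ht⟩)
  rw [eval_mul, show eval t _ = 0 from this, mul_zero]

lemma nodalWeight_mul_eval_nodal_erase {t : ℝ} (ht : t ∈ s) :
    nodalWeight s id t * (nodal (s.erase t) id).eval t = 1 := by
  have := nodalWeight_ne_zero (v := id) (injOn_id _) ht
  rw [nodalWeight_eq_eval_nodal_erase_inv] at this ⊢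
  exact inv_mul_cancel₀ (mt inv_eq_zero.2 this)

lemma eq_C_mul_nodal {p : ℝ[X]} (hp : p.degree ≤ Z.card) (hZ : ∀ z ∈ Z, p.eval z = 0) :
    p = C (p.coeff Z.card) * nodal Z id := by
  refine sub_eq_zero.1 (eq_zero_of_degree_lt_of_eval_finset_eq_zero Z ?_ fun z hz => ?_)
  · rw [degree_lt_iff_coeff_zero]
    intro k hk
    rw [coeff_sub, coeff_C_mul]
    rcases hk.eq_or_lt with rfl | hk
    · have hlead := (nodal_monic (s := Z) (v := id)).coeff_natDegree
      rw [natDegree_nodal] at hlead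
      rw [hlead, mul_one, sub_self]
    · rw [coeff_eq_zero_of_degree_lt (hp.trans_lt (Nat.cast_lt.2 hk)),
        coeff_eq_zero_of_degree_lt (degree_nodal.trans_lt (Nat.cast_lt.2 hk)), mul_zero, sub_zero]
  · have hnode : (nodal Z id).eval z = 0 := eval_nodal_at_node (v := id) hz
    rw [eval_sub, eval_mul, hnode, hZ z hz, mul_zero, sub_zero]

/-- The numerator is orthogonal on `s`, with weights of constant sign, to all polynomials of degree
less than `#s - 1`. -/
lemma exists_cauchyNumerator_eq (hΔ : Δ.OrdConnected) (hs : ↑s ⊆ Δ) (hne : s.Nonempty)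
    (hw : HasConstSign (s : Set ℝ) w) :
    ∃ Z : Finset ℝ, ↑Z ⊆ Δ ∧ Z.card + 1 = s.card ∧ ∃ κ ≠ 0,
      cauchyNumerator s w = C κ * nodal Z id := by
  set q := cauchyNumerator s w
  have hcard : 1 ≤ s.card := hne.card_pos
  have hlam : HasConstSign (s : Set ℝ) fun t => nodalWeight s id t ^ 2 / w t := by
    refine HasConstSign.mul (fun t ht u hu => ?_) hw.inv
    have h (x) (hx : x ∈ s) := nodalWeight_ne_zero (v := id) (injOn_id _) hx
    have := h t ht
    have := h u hu
    positivity
  obtain ⟨Z, hZΔ, hZcard, hZ⟩ := exists_zeros_of_orthogonal_polynomials hΔ hs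
    (Nat.sub_le s.card 1) hlam q.continuousOn fun p hp => by
      have hlt := hp.trans_le (Nat.cast_le.2 (Nat.sub_le s.card 1))
      rw [← coeff_eq_zero_of_degree_lt hp, ← sum_nodalWeight_mul_eval hlt]
      refine Finset.sum_congr rfl fun t ht => ?_
      rw [eval_cauchyNumerator_node ht]
      have := hw.ne_zero ht
      field_simp
      linear_combination nodalWeight s id t * p.eval t * nodalWeight_mul_eval_nodal_erase ht
  have hdeg : q.degree ≤ Z.card := by
    refine (degree_sum_le _ _).trans (Finset.sup_le fun t ht => ?_)
    rw [degree_mul, degree_nodal, Finset.card_erase_of_mem ht, hZcard]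
    exact (add_le_add_left degree_C_le _).trans_eq (zero_add _)
  have hq := eq_C_mul_nodal hdeg hZ
  refine ⟨Z, hZΔ, by omega, q.coeff Z.card, fun h0 => ?_, hq⟩
  obtain ⟨t, ht⟩ := hne
  rw [h0, C_0, zero_mul] at hq
  have hqt := eval_cauchyNumerator_node (w := w) ht
  rw [show cauchyNumerator s w = 0 from hq, eval_zero] at hqt
  exact mul_ne_zero (hw.ne_zero ht)
    (right_ne_zero_of_mul_eq_one (nodalWeight_mul_eval_nodal_erase ht)) hqt.symm

lemma notMem_of_cauchyNumerator_eq (hw : HasConstSign (s : Set ℝ) w) {κ : ℝ}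
    (hq : cauchyNumerator s w = C κ * nodal Z id) {z : ℝ} (hz : z ∈ Z) : z ∉ s := by
  intro hzs
  have hnode : (nodal Z id).eval z = 0 := eval_nodal_at_node (v := id) hz
  have hqz := eval_cauchyNumerator_node (w := w) hzs
  rw [hq, eval_mul, hnode, mul_zero] at hqz
  exact mul_ne_zero (hw.ne_zero hzs)
    (right_ne_zero_of_mul_eq_one (nodalWeight_mul_eval_nodal_erase hzs)) hqz.symm

lemma sum_mul_inv_sq_eq {κ : ℝ} (hq : cauchyNumerator s w = C κ * nodal Z id)
    (hcard : Z.card ≤ s.card) {z : ℝ} (hz : z ∈ Z) (hzs : z ∉ s) :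
    ∑ t ∈ s, w t * ((z - t) ^ 2)⁻¹ =
      -(κ * (nodal (Z.erase z) id).eval z / (nodal s id).eval z) := by
  set p := C κ * nodal (Z.erase z) id with hp
  have hdeg : p.degree < s.card := by
    refine ((degree_mul_le _ _).trans (add_le_add_left degree_C_le _)).trans_lt ?_
    rw [zero_add, degree_nodal, Nat.cast_lt]
    exact (Finset.card_erase_lt_of_mem hz).trans_le hcard
  have hnode (t) (ht : t ∈ s) : nodalWeight s id t * p.eval t = w t / (t - z) := by
    have hqt := eval_cauchyNumerator_node (w := w) ht
    rw [hq, nodal_eq_mul_nodal_erase hz, mul_left_comm, ← hp, eval_mul, eval_sub, eval_X, eval_C,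
      id] at hqt
    rw [eq_div_iff (sub_ne_zero.2 (ne_of_mem_of_not_mem ht hzs))]
    linear_combination nodalWeight s id t * hqt + w t * nodalWeight_mul_eval_nodal_erase ht
  have hsum := sum_nodalWeight_mul_eval_div hdeg hzs
  rw [hp, eval_mul, eval_C, ← hp] at hsum
  rw [← hsum, ← Finset.sum_neg_distrib]
  refine Finset.sum_congr rfl fun t ht => ?_
  have : z - t ≠ 0 := sub_ne_zero.2 (ne_of_mem_of_not_mem ht hzs).symm
  rw [hnode t ht, ← neg_sub z t]
  field_simp

lemma nodal_eq_linear_mul_nodal_add (hcard : s.card = Z.card + 1) :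
    ∃ (α β : ℝ) (r : ℝ[X]), nodal s id = (C α * X + C β) * nodal Z id + r ∧
      r.degree < Z.card := by
  have hmonic := nodal_monic (s := Z) (v := id)
  have hquot : (nodal s id /ₘ nodal Z id).natDegree ≤ 1 := by
    rw [natDegree_divByMonic _ hmonic, natDegree_nodal, natDegree_nodal, hcard,
      Nat.add_sub_cancel_left]
  obtain ⟨α, β, hαβ⟩ := exists_eq_X_add_C_of_natDegree_le_one hquot
  refine ⟨α, β, nodal s id %ₘ nodal Z id, ?_, ?_⟩
  · rw [← hαβ, mul_comm, add_comm, modByMonic_add_div]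
  · exact (degree_modByMonic_lt _ hmonic).trans_eq degree_nodal

lemma inv_cauchySum_eq {κ α β : ℝ} {r : ℝ[X]} (hκ : κ ≠ 0)
    (hq : cauchyNumerator s w = C κ * nodal Z id)
    (hdiv : nodal s id = (C α * X + C β) * nodal Z id + r) (hr : r.degree < Z.card) {x : ℝ}
    (hxs : x ∉ s) (hxZ : x ∉ Z) :
    (cauchySum s w x)⁻¹ = α / κ * x + β / κ +
      cauchySum Z (fun z => nodalWeight Z id z * (nodal s id).eval z / κ) x := by
  have hNs : (nodal s id).eval x ≠ 0 :=
    eval_nodal_not_at_node fun t ht => (ne_of_mem_of_not_mem ht hxs).symm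
  have hNZ : (nodal Z id).eval x ≠ 0 :=
    eval_nodal_not_at_node fun t ht => (ne_of_mem_of_not_mem ht hxZ).symm
  have hσ := eval_cauchyNumerator (w := w) hxs
  rw [hq, eval_mul, eval_C] at hσ
  have hrZ (z) (hz : z ∈ Z) : r.eval z = (nodal s id).eval z := by
    have hnode : (nodal Z id).eval z = 0 := eval_nodal_at_node (v := id) hz
    rw [hdiv, eval_add, eval_mul, hnode, mul_zero, zero_add]
  have hcauchy : cauchySum Z (fun z => nodalWeight Z id z * (nodal s id).eval z / κ) x =
      r.eval x / (nodal Z id).eval x / κ := by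
    rw [← sum_nodalWeight_mul_eval_div hr hxZ, cauchySum, Finset.sum_div]
    exact Finset.sum_congr rfl fun z hz => by rw [hrZ z hz, div_right_comm]
  have hdivx := congrArg (eval x) hdiv
  simp only [eval_add, eval_mul, eval_C, eval_X] at hdivx
  rw [hcauchy, (eq_div_iff hNs).2 hσ.symm, inv_div, hdivx]
  field_simp

theorem exists_inv_cauchySum_eq (hΔ : Δ.OrdConnected) (hs : ↑s ⊆ Δ) (hne : s.Nonempty)
    (hw : HasConstSign (s : Set ℝ) w) :
    ∃ (α β : ℝ) (Z : Finset ℝ) (v : ℝ → ℝ), ↑Z ⊆ Δ ∧ Z.card + 1 = s.card ∧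
      HasConstSign (Z : Set ℝ) v ∧
      ∀ x ∉ Δ, (cauchySum s w x)⁻¹ = α * x + β + cauchySum Z v x := by
  obtain ⟨Z, hZΔ, hcard, κ, hκ, hq⟩ := exists_cauchyNumerator_eq hΔ hs hne hw
  obtain ⟨α, β, r, hdiv, hr⟩ := nodal_eq_linear_mul_nodal_add hcard.symm
  have hZs (z) (hz : z ∈ Z) : z ∉ s := notMem_of_cauchyNumerator_eq hw hq hz
  refine ⟨α / κ, β / κ, Z, fun z => nodalWeight Z id z * (nodal s id).eval z / κ, hZΔ, hcard,
    ?_, fun x hx => inv_cauchySum_eq hκ hq hdiv hr (mt (@hs x) hx) (mt (@hZΔ x) hx)⟩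
  have hsq : HasConstSign (Z : Set ℝ) fun z => ∑ t ∈ s, w t * ((z - t) ^ 2)⁻¹ :=
    hw.sum_mul hne fun z hz t ht => inv_pos.2
      (sq_pos_of_ne_zero (sub_ne_zero.2 (ne_of_mem_of_not_mem ht (hZs z hz)).symm))
  refine hsq.inv.neg.congr fun z hz => ?_
  simp only [sum_mul_inv_sq_eq hq (by omega) hz (hZs z hz), nodalWeight_eq_eval_nodal_erase_inv,
    id, inv_neg, neg_neg, inv_div]
  rw [div_mul_eq_div_div_swap]
  ring

lemma cauchySum_sub_cauchySum (hs : ↑s ⊆ Δ) {x u : ℝ} (hx : x ∉ Δ) (hu : u ∉ Δ) :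
    cauchySum s w x - cauchySum s w u =
      (x - u) * ∑ t ∈ s, w t / ((x - t) * (t - u)) := by
  rw [cauchySum, cauchySum, ← Finset.sum_sub_distrib, Finset.mul_sum]
  refine Finset.sum_congr rfl fun t ht => ?_
  have h1 : x - t ≠ 0 := sub_ne_zero.2 (ne_of_mem_of_not_mem (hs ht) hx).symm
  have h2 : t - u ≠ 0 := sub_ne_zero.2 (ne_of_mem_of_not_mem (hs ht) hu)
  have h3 : u - t ≠ 0 := sub_ne_zero.2 (ne_of_mem_of_not_mem (hs ht) hu).symm
  field_simp
  ring

lemma continuousOn_sum_div_mul (hs : ↑s ⊆ Δ) (u : ℝ) :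
    ContinuousOn (fun x => ∑ t ∈ s, w t / ((x - t) * (t - u))) Δᶜ := by
  refine (continuousOn_cauchySum (w := fun t => w t / (t - u)) hs).congr fun x _ => ?_
  exact Finset.sum_congr rfl fun t _ => by rw [div_div, mul_comm]

/-- The divided difference of `1 / f` is that of `f` times `-1 / (f x f u)`; the case `x = u`
follows by continuity. -/
theorem sum_div_mul_eq_of_inv (hΔ : IsClosed Δ) (hs : ↑s ⊆ Δ) (hZ : ↑Z ⊆ Δ) {α β : ℝ}
    (h0 : ∀ x ∉ Δ, cauchySum s w x ≠ 0)
    (hinv : ∀ x ∉ Δ, (cauchySum s w x)⁻¹ = α * x + β + cauchySum Z v x) {x u : ℝ} (hx : x ∉ Δ)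
    (hu : u ∉ Δ) :
    ∑ t ∈ s, w t / ((x - t) * (t - u)) =
      -(cauchySum s w x * cauchySum s w u * (α + ∑ y ∈ Z, v y / ((x - y) * (y - u)))) := by
  have hne {x : ℝ} (hx : x ∉ Δ) (hxu : x ≠ u) :
      ∑ t ∈ s, w t / ((x - t) * (t - u)) =
        -(cauchySum s w x * cauchySum s w u * (α + ∑ y ∈ Z, v y / ((x - y) * (y - u)))) := by
    refine mul_left_cancel₀ (sub_ne_zero.2 hxu) ?_
    have hZsub := cauchySum_sub_cauchySum (w := v) hZ hx hu
    have hix := inv_mul_cancel₀ (h0 x hx)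
    have hiu := inv_mul_cancel₀ (h0 u hu)
    rw [hinv x hx] at hix
    rw [hinv u hu] at hiu
    rw [← cauchySum_sub_cauchySum hs hx hu]
    linear_combination cauchySum s w u * hix - cauchySum s w x * hiu -
      cauchySum s w x * cauchySum s w u * hZsub
  rcases ne_or_eq x u with hxu | rfl
  · exact hne hx hxu
  · have hopen : Δᶜ ∈ 𝓝 x := hΔ.isOpen_compl.mem_nhds hx
    have hev : ∀ᶠ y in 𝓝[≠] x, y ∉ Δ ∧ y ≠ x :=
      (eventually_nhdsWithin_of_eventually_nhds hopen).and self_mem_nhdsWithin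
    refine ((ContinuousAt.eventuallyEq_nhds_iff_eventuallyEq_nhdsNE
      ((continuousOn_sum_div_mul hs x).continuousAt hopen) ?_).1
        (hev.mono fun y hy => hne hy.1 hy.2)).eq_of_nhds
    exact ((((continuousOn_cauchySum hs).mul continuousOn_const).mul
      (continuousOn_const.add (continuousOn_sum_div_mul hZ x))).neg).continuousAt hopen

end CauchySum

lemma isCompact_convexHull {E : Type*} [AddCommGroup E] [Module ℝ E] [TopologicalSpace E]
    [ContinuousAdd E] [ContinuousSMul ℝ E] [FiniteDimensional ℝ E] {K : Set E}
    (hK : IsCompact K) : IsCompact (convexHull ℝ K) := by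
  let comb (k : ℕ) (p : (Fin k → ℝ) × (Fin k → E)) : E := ∑ i, p.1 i • p.2 i
  let D (k : ℕ) : Set ((Fin k → ℝ) × (Fin k → E)) := stdSimplex ℝ (Fin k) ×ˢ univ.pi fun _ => K
  have hcompact (k : ℕ) : IsCompact (comb k '' D k) :=
    ((isCompact_stdSimplex ℝ (Fin k)).prod (isCompact_univ_pi fun _ => hK)).image
      (by fun_prop)
  suffices h : convexHull ℝ K = ⋃ k ∈ Iic (Module.finrank ℝ E + 1), comb k '' D k by
    rw [h]
    exact (finite_Iic _).isCompact_biUnion fun k _ => hcompact k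
  refine Subset.antisymm (fun x hx => ?_) (iUnion₂_subset fun k _ => ?_)
  · rw [← image_id K] at hx
    obtain ⟨s, w, hsK, hw, hw1, hwx, hcard⟩ := exists_finset_pos_of_mem_convexHull_image hx
    let e := s.equivFin.symm
    refine mem_biUnion hcard ⟨(fun i => w (e i), fun i => e i), ⟨⟨fun i => ?_, ?_⟩, ?_⟩, ?_⟩
    · exact (hw _ (e i).2).le
    · rw [← hw1, ← s.sum_coe_sort]
      exact e.sum_comp fun t => w t
    · exact fun i _ => hsK (e i).2
    · rw [← hwx, ← s.sum_coe_sort]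
      exact e.sum_comp fun t => w t • (t : E)
  · rintro _ ⟨⟨w, z⟩, ⟨⟨hw, hw1⟩, hz⟩, rfl⟩
    exact (convex_convexHull ℝ K).sum_mem (fun i _ => hw i) hw1
      fun i _ => subset_convexHull ℝ K (hz i (mem_univ i))

section Quadrature

variable {V : Type*} [AddCommGroup V] [Module ℝ V] [FiniteDimensional ℝ V] {μ : Measure ℝ}
  [IsFiniteMeasure μ] {Δ : Set ℝ}

lemma integrable_of_continuousOn_of_ae_mem (hΔ : IsCompact Δ) (hμ : ∀ᵐ x ∂μ, x ∈ Δ) {φ : ℝ → ℝ}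
    (hφ : ContinuousOn φ Δ) : Integrable φ μ := by
  have := hφ.integrableOn_compact (μ := μ) hΔ
  rwa [IntegrableOn, Measure.restrict_eq_self_of_ae_mem hμ] at this

/-- Tchakaloff's theorem: the average of a curve lies in the (compact) convex hull of the curve. -/
lemma exists_positive_quadrature (hΔ : IsCompact Δ) (hμ : ∀ᵐ x ∂μ, x ∈ Δ) (hμ0 : μ ≠ 0)
    {ψ : V →ₗ[ℝ] ℝ → ℝ} (hψ : ∀ v, ContinuousOn (ψ v) Δ) :
    ∃ (s : Finset ℝ) (w : ℝ → ℝ), ↑s ⊆ Δ ∧ (∀ t ∈ s, 0 < w t) ∧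
      ∀ v, ∫ t, ψ v t ∂μ = ∑ t ∈ s, w t * ψ v t := by
  have : NeZero μ := ⟨hμ0⟩
  have hψint (v) : Integrable (ψ v) μ := integrable_of_continuousOn_of_ae_mem hΔ hμ (hψ v)
  let b := Module.finBasis ℝ V
  let Φ (t : ℝ) (i : Fin (Module.finrank ℝ V)) : ℝ := ψ (b i) t
  have hΦ : ContinuousOn Φ Δ := continuousOn_pi.2 fun i => hψ (b i)
  have hmem : ⨍ t, Φ t ∂μ ∈ convexHull ℝ (Φ '' Δ) :=
    (convex_convexHull ℝ _).average_mem
      (isCompact_convexHull (hΔ.image_of_continuousOn hΦ)).isClosed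
      (hμ.mono fun t ht => subset_convexHull ℝ _ (mem_image_of_mem Φ ht))
      (Integrable.of_eval fun i => hψint (b i))
  obtain ⟨s, w, hs, hw, -, hwΦ, -⟩ := exists_finset_pos_of_mem_convexHull_image hmem
  have hμpos : 0 < μ.real univ := measureReal_univ_pos
  refine ⟨s, fun t => μ.real univ * w t, hs, fun t ht => mul_pos hμpos (hw t ht), ?_⟩
  let integral : V →ₗ[ℝ] ℝ :=
    { toFun v := ∫ t, ψ v t ∂μ
      map_add' u v := by simpa using integral_add (hψint u) (hψint v)
      map_smul' c v := by simpa using integral_const_mul c (ψ v) }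
  let sum : V →ₗ[ℝ] ℝ := ∑ t ∈ s, (μ.real univ * w t) • LinearMap.proj t ∘ₗ ψ
  have heq : integral = sum := b.ext fun i => by
    have hi := congrFun hwΦ i
    rw [average_eq, Pi.smul_apply, eval_integral fun i => hψint (b i)] at hi
    simp only [Finset.sum_apply, Pi.smul_apply, smul_eq_mul] at hi
    rw [eq_inv_mul_iff_mul_eq₀ hμpos.ne', Finset.mul_sum] at hi
    simpa [integral, sum, mul_assoc] using hi.symm
  intro v
  simpa [integral, sum] using LinearMap.congr_fun heq v

lemma exists_positive_quadrature_card_ge (hΔ : IsCompact Δ) (hμ : ∀ᵐ x ∂μ, x ∈ Δ)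
    (hinf : ∀ s : Finset ℝ, μ (↑s)ᶜ ≠ 0) {ψ : V →ₗ[ℝ] ℝ → ℝ} (hψ : ∀ v, ContinuousOn (ψ v) Δ)
    (L : ℕ) :
    ∃ (s : Finset ℝ) (w : ℝ → ℝ), ↑s ⊆ Δ ∧ L ≤ s.card ∧ (∀ t ∈ s, 0 < w t) ∧
      ∀ v, ∫ t, ψ v t ∂μ = ∑ t ∈ s, w t * ψ v t := by
  have hμ0 : μ ≠ 0 := by
    rintro rfl
    exact hinf ∅ rfl
  obtain ⟨s, w, hs, hw, hexact⟩ := exists_positive_quadrature hΔ hμ hμ0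
    (ψ := ψ.coprod (polyEval (2 * L))) fun v => by
      simpa using (hψ v.1).add ((isHaar_polyEval _ Δ).continuousOn v.2)
  refine ⟨s, w, hs, ?_, hw, fun v => by simpa using hexact (v, 0)⟩
  by_contra! hlt
  set p := Lagrange.nodal s id ^ 2 with hp
  have hpdeg : p ∈ degreeLT ℝ (2 * L) := by
    rw [mem_degreeLT, hp, degree_pow, Lagrange.degree_nodal, nsmul_eq_mul]
    exact_mod_cast (by omega)
  have hpint : ∫ t, p.eval t ∂μ = 0 := by
    have := hexact (0, ⟨p, hpdeg⟩)
    simp only [LinearMap.coprod_apply, map_zero, zero_add] at this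
    refine this.trans (Finset.sum_eq_zero fun t ht => ?_)
    have hnode : (Lagrange.nodal s id).eval t = 0 := Lagrange.eval_nodal_at_node (v := id) ht
    change w t * p.eval t = 0
    rw [hp, eval_pow, hnode, zero_pow two_ne_zero, mul_zero]
  rw [integral_eq_zero_iff_of_nonneg (fun t => by rw [hp, eval_pow]; exact sq_nonneg _)
    (integrable_of_continuousOn_of_ae_mem hΔ hμ p.continuousOn)] at hpint
  refine hinf s (measure_mono_null (fun x hx => ?_) (ae_iff.1 hpint))
  have hne : (Lagrange.nodal s id).eval x ≠ 0 :=
    Lagrange.eval_nodal_not_at_node fun t ht => (ne_of_mem_of_not_mem ht hx).symm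
  simpa [hp] using hne

end Quadrature

lemma continuousOn_div_sub {Δ : Set ℝ} {φ : ℝ → ℝ} (hφ : ContinuousOn φ Δ) {x : ℝ} (hx : x ∉ Δ) :
    ContinuousOn (fun t => φ t / (x - t)) Δ :=
  hφ.div (by fun_prop) fun _ ht => sub_ne_zero.2 (ne_of_mem_of_not_mem ht hx).symm

lemma continuousOn_integral_div_sub {μ : Measure ℝ} [IsFiniteMeasure μ] {Δ : Set ℝ}
    (hΔ : IsCompact Δ) (hμ : ∀ᵐ x ∂μ, x ∈ Δ) {φ : ℝ → ℝ} (hφ : ContinuousOn φ Δ) :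
    ContinuousOn (fun x => ∫ t, φ t / (x - t) ∂μ) Δᶜ := by
  have hsub {x t : ℝ} (hx : x ∈ Δᶜ) (ht : t ∈ Δ) : x - t ≠ 0 :=
    sub_ne_zero.2 (ne_of_mem_of_not_mem ht hx).symm
  intro x₀ hx₀
  obtain ⟨K, hK, hx₀K, hKΔ⟩ := exists_compact_subset hΔ.isClosed.isOpen_compl hx₀
  have hKx₀ : K ∈ nhds x₀ := mem_interior_iff_mem_nhds.1 hx₀K
  have hcont : ContinuousOn (fun p : ℝ × ℝ => φ p.2 / (p.1 - p.2)) (K ×ˢ Δ) :=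
    (hφ.comp continuousOn_snd fun p hp => hp.2).div (by fun_prop) fun p hp => hsub (hKΔ hp.1) hp.2
  obtain ⟨M, hM⟩ := (hK.prod hΔ).exists_bound_of_continuousOn hcont
  refine (continuousAt_of_dominated (bound := fun _ => M) ?_ ?_ (integrable_const M)
    ?_).continuousWithinAt
  · filter_upwards [hKx₀] with x hx
    exact (integrable_of_continuousOn_of_ae_mem hΔ hμ
      (continuousOn_div_sub hφ (hKΔ hx))).aestronglyMeasurable
  · filter_upwards [hKx₀] with x hx
    filter_upwards [hμ] with t ht
    exact hM (x, t) ⟨hx, ht⟩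
  · filter_upwards [hμ] with t ht
    exact continuousAt_const.div (by fun_prop) (hsub hx₀ ht)

/-- `I` is integration over the compact interval `Δ` against a signed measure that is definite on
`Δ`: a continuous density `ρ` of constant sign relative to a finite measure `μ` which no finite set
carries. Only the functional is recorded, so that it can be reweighted and discretized freely. -/
structure IsDefiniteIntegral (I : (ℝ → ℝ) → ℝ) (Δ : Set ℝ) : Prop where
  isCompact : IsCompact Δ
  ordConnected : Δ.OrdConnected
  exists_density : ∃ (μ : Measure ℝ) (ρ : ℝ → ℝ), IsFiniteMeasure μ ∧ (∀ᵐ x ∂μ, x ∈ Δ) ∧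
    (∀ s : Finset ℝ, μ (↑s)ᶜ ≠ 0) ∧ ContinuousOn ρ Δ ∧ HasConstSign Δ ρ ∧
    ∀ φ, I φ = ∫ t, ρ t * φ t ∂μ

namespace IsDefiniteIntegral

variable {I : (ℝ → ℝ) → ℝ} {Δ : Set ℝ} {φ χ σ : ℝ → ℝ}

lemma congr (hI : IsDefiniteIntegral I Δ) (h : EqOn φ χ Δ) : I φ = I χ := by
  obtain ⟨μ, ρ, -, hμ, -, -, -, hIφ⟩ := hI.exists_density
  rw [hIφ, hIφ]
  refine integral_congr_ae ?_
  filter_upwards [hμ] with t ht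
  rw [h ht]

lemma map_sum (hI : IsDefiniteIntegral I Δ) {ι : Type*} {s : Finset ι} {φ : ι → ℝ → ℝ}
    (hφ : ∀ i ∈ s, ContinuousOn (φ i) Δ) :
    I (fun t => ∑ i ∈ s, φ i t) = ∑ i ∈ s, I (φ i) := by
  obtain ⟨μ, ρ, _, hμ, -, hρ, -, hIφ⟩ := hI.exists_density
  simp only [hIφ, Finset.mul_sum]
  exact integral_finsetSum _ fun i hi =>
    integrable_of_continuousOn_of_ae_mem hI.isCompact hμ (hρ.mul (hφ i hi))

lemma map_add (hI : IsDefiniteIntegral I Δ) (hφ : ContinuousOn φ Δ) (hχ : ContinuousOn χ Δ) :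
    I (fun t => φ t + χ t) = I φ + I χ := by
  simpa using hI.map_sum (s := Finset.univ) (φ := fun b : Bool => cond b φ χ) (by simp [hφ, hχ])

lemma map_const_mul (hI : IsDefiniteIntegral I Δ) (c : ℝ) (φ : ℝ → ℝ) :
    I (fun t => c * φ t) = c * I φ := by
  obtain ⟨μ, ρ, -, -, -, -, -, hIφ⟩ := hI.exists_density
  simp only [hIφ, mul_left_comm _ c, integral_const_mul]

lemma eval_mul_eq_zero (hI : IsDefiniteIntegral I Δ) (hφ : ContinuousOn φ Δ) {n : ℕ}
    (h : ∀ ν < n, I (fun t => t ^ ν * φ t) = 0) {p : ℝ[X]} (hp : p.degree < n) :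
    I (fun t => p.eval t * φ t) = 0 := by
  have hcont (ν : Fin n) : ContinuousOn
      (fun t => degreeLTEquiv ℝ n ⟨p, mem_degreeLT.2 hp⟩ ν * (t ^ (ν : ℕ) * φ t)) Δ :=
    continuousOn_const.mul ((continuousOn_pow _).mul hφ)
  simp only [eval_eq_sum_degreeLTEquiv (mem_degreeLT.2 hp), Finset.sum_mul, mul_assoc]
  rw [hI.map_sum fun ν _ => hcont ν]
  exact Finset.sum_eq_zero fun ν _ => by rw [hI.map_const_mul, h ν ν.2, mul_zero]

lemma reweight (hI : IsDefiniteIntegral I Δ) (hσ : ContinuousOn σ Δ) (hσc : HasConstSign Δ σ) :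
    IsDefiniteIntegral (fun φ => I fun t => σ t * φ t) Δ := by
  obtain ⟨μ, ρ, hfin, hμ, hinf, hρ, hρc, hIφ⟩ := hI.exists_density
  exact ⟨hI.isCompact, hI.ordConnected, μ, fun t => ρ t * σ t, hfin, hμ, hinf, hρ.mul hσ,
    hρc.mul hσc, fun φ => by simp only [hIφ, mul_assoc]⟩

lemma continuousOn_cauchy (hI : IsDefiniteIntegral I Δ) (hφ : ContinuousOn φ Δ) :
    ContinuousOn (fun x => I fun t => φ t / (x - t)) Δᶜ := by
  obtain ⟨μ, ρ, _, hμ, -, hρ, -, hIφ⟩ := hI.exists_density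
  simpa only [hIφ, Pi.mul_apply, mul_div_assoc] using
    continuousOn_integral_div_sub hI.isCompact hμ (hρ.mul hφ)

lemma exists_quadrature (hI : IsDefiniteIntegral I Δ) {V : Type*} [AddCommGroup V] [Module ℝ V]
    [FiniteDimensional ℝ V] {ψ : V →ₗ[ℝ] ℝ → ℝ} (hψ : ∀ v, ContinuousOn (ψ v) Δ) (L : ℕ) :
    ∃ (s : Finset ℝ) (w : ℝ → ℝ), ↑s ⊆ Δ ∧ L ≤ s.card ∧ HasConstSign (s : Set ℝ) w ∧
      ∀ v, I (ψ v) = ∑ t ∈ s, w t * ψ v t := by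
  obtain ⟨μ, ρ, _, hμ, hinf, hρ, hρc, hIφ⟩ := hI.exists_density
  obtain ⟨s, w, hs, hL, hw, hquad⟩ := exists_positive_quadrature_card_ge hI.isCompact hμ hinf
    (ψ := (LinearMap.mulLeft ℝ ρ) ∘ₗ ψ) (fun v => hρ.mul (hψ v)) L
  have hwc : HasConstSign (s : Set ℝ) w := fun x hx y hy => mul_pos (hw x hx) (hw y hy)
  refine ⟨s, fun t => w t * ρ t, hs, hL, hwc.mul (hρc.mono hs), fun v => ?_⟩
  rw [hIφ]
  exact (hquad v).trans (Finset.sum_congr rfl fun t _ => (mul_assoc _ _ _).symm)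

lemma exists_quadrature_family (hI : IsDefiniteIntegral I Δ) {ι : Type*} [Finite ι]
    {φ : ι → ℝ → ℝ} (hφ : ∀ i, ContinuousOn (φ i) Δ) (L : ℕ) :
    ∃ (s : Finset ℝ) (w : ℝ → ℝ), ↑s ⊆ Δ ∧ L ≤ s.card ∧ HasConstSign (s : Set ℝ) w ∧
      ∀ i, I (φ i) = ∑ t ∈ s, w t * φ i t := by
  classical
  have := Fintype.ofFinite ι
  obtain ⟨s, w, hs, hL, hw, hquad⟩ := hI.exists_quadrature
    (ψ := Fintype.linearCombination ℝ φ) (fun c => by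
      simpa [Fintype.linearCombination_apply, Finset.sum_fn] using
        continuousOn_finsetSum _ fun i _ => (hφ i).const_smul (c i)) L
  exact ⟨s, w, hs, hL, hw, fun i => by simpa using hquad (Pi.single i 1)⟩

lemma exists_zeros (hI : IsDefiniteIntegral I Δ) {V : Type*} [AddCommGroup V] [Module ℝ V]
    [FiniteDimensional ℝ V] {ψ : V →ₗ[ℝ] ℝ → ℝ} (hψ : IsHaar ψ Δ) {f : ℝ → ℝ}
    (hf : ContinuousOn f Δ) (h : ∀ v, I (fun t => f t * ψ v t) = 0) :
    ∃ Z : Finset ℝ, ↑Z ⊆ Δ ∧ Z.card = Module.finrank ℝ V ∧ ∀ z ∈ Z, f z = 0 := by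
  obtain ⟨s, w, hs, hL, hw, hquad⟩ := hI.exists_quadrature
    (ψ := (LinearMap.mulLeft ℝ f) ∘ₗ ψ) (fun v => hf.mul (hψ.continuousOn v))
    (Module.finrank ℝ V)
  refine hψ.exists_zeros hI.ordConnected hs hL hw hf fun v => ?_
  simp only [mul_assoc]
  exact (hquad v).symm.trans (h v)

end IsDefiniteIntegral

/-- The iterated Cauchy transform `ŝ_{0,k-1}` of the measures behind `I 0, …, I (k-1)`, with value
`1` for `k = 0`. -/
def iterCauchy : ℕ → (ℕ → (ℝ → ℝ) → ℝ) → ℝ → ℝ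
  | 0, _, _ => 1
  | k + 1, I, x => I 0 fun t => iterCauchy k (fun i => I (i + 1)) t / (x - t)

/-- A Nikishin system of `m` generators, as definite integrals `I i` on `Δ i`. -/
structure IsNikishinFamily (m : ℕ) (I : ℕ → (ℝ → ℝ) → ℝ) (Δ : ℕ → Set ℝ) : Prop where
  isDefiniteIntegral : ∀ i < m, IsDefiniteIntegral (I i) (Δ i)
  disjoint : ∀ i, i + 1 < m → Disjoint (Δ i) (Δ (i + 1))

/-- The points at which every `iterCauchy k I`, `k ≤ m`, is regular; all of `ℝ` when `m = 0`. -/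
def regularSet (m : ℕ) (Δ : ℕ → Set ℝ) : Set ℝ := {x | 0 < m → x ∉ Δ 0}

/-- The linear form `∑ g_k ŝ_{0,k-1}`, `k ≤ m`, with polynomial coefficients. -/
def nikishinForm (m : ℕ) (I : ℕ → (ℝ → ℝ) → ℝ) (g : ℕ → ℝ[X]) (x : ℝ) : ℝ :=
  ∑ k ∈ Finset.range (m + 1), (g k).eval x * iterCauchy k I x

lemma nikishinForm_succ (m : ℕ) (I : ℕ → (ℝ → ℝ) → ℝ) (g : ℕ → ℝ[X]) (x : ℝ) :
    nikishinForm (m + 1) I g x =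
      (g 0).eval x + ∑ k ∈ Finset.range (m + 1), (g (k + 1)).eval x * iterCauchy (k + 1) I x := by
  rw [nikishinForm, Finset.sum_range_succ', add_comm]
  simp only [iterCauchy, mul_one]

lemma regularSet_succ (m : ℕ) (Δ : ℕ → Set ℝ) : regularSet (m + 1) Δ = (Δ 0)ᶜ := by
  ext x
  simp [regularSet]

namespace IsNikishinFamily

variable {m : ℕ} {I : ℕ → (ℝ → ℝ) → ℝ} {Δ : ℕ → Set ℝ}

lemma tail (hS : IsNikishinFamily (m + 1) I Δ) :
    IsNikishinFamily m (fun i => I (i + 1)) fun i => Δ (i + 1) :=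
  ⟨fun i hi => hS.isDefiniteIntegral (i + 1) (by omega), fun i hi => hS.disjoint (i + 1) (by omega)⟩

lemma subset_regularSet_tail (hS : IsNikishinFamily (m + 1) I Δ) :
    Δ 0 ⊆ regularSet m fun i => Δ (i + 1) :=
  fun _ hx hm => disjoint_left.1 (hS.disjoint 0 (by omega)) hx

lemma continuousOn_iterCauchy {k : ℕ} (hS : IsNikishinFamily m I Δ) (hk : k ≤ m) :
    ContinuousOn (iterCauchy k I) (regularSet m Δ) := by
  induction k generalizing m I Δ with
  | zero => exact continuousOn_const
  | succ k ih =>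
    obtain ⟨m, rfl⟩ := Nat.exists_eq_add_of_le' (Nat.one_le_of_lt hk)
    rw [regularSet_succ]
    exact (hS.isDefiniteIntegral 0 (by omega)).continuousOn_cauchy
      ((ih hS.tail (by omega)).mono hS.subset_regularSet_tail)

lemma continuousOn_iterCauchy_tail {k : ℕ} (hS : IsNikishinFamily (m + 1) I Δ) (hk : k ≤ m) :
    ContinuousOn (iterCauchy k fun i => I (i + 1)) (Δ 0) :=
  (hS.tail.continuousOn_iterCauchy hk).mono hS.subset_regularSet_tail

lemma continuousOn_nikishinForm (hS : IsNikishinFamily m I Δ) (g : ℕ → ℝ[X]) :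
    ContinuousOn (nikishinForm m I g) (regularSet m Δ) :=
  continuousOn_finsetSum _ fun k hk => (g k).continuousOn.mul
    (hS.continuousOn_iterCauchy (Finset.mem_range_succ_iff.1 hk))

lemma exists_quadrature (hS : IsNikishinFamily (m + 1) I Δ) {T : Finset ℝ}
    (hT : Disjoint (T : Set ℝ) (Δ 0)) (L : ℕ) :
    ∃ (s : Finset ℝ) (w : ℝ → ℝ), ↑s ⊆ Δ 0 ∧ L ≤ s.card ∧ HasConstSign (s : Set ℝ) w ∧
      ∀ x ∈ T, ∀ k ≤ m, iterCauchy (k + 1) I x =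
        cauchySum s (fun t => w t * iterCauchy k (fun i => I (i + 1)) t) x := by
  obtain ⟨s, w, hs, hL, hw, hquad⟩ := (hS.isDefiniteIntegral 0 (by omega)).exists_quadrature_family
    (φ := fun (i : T × Fin (m + 1)) t => iterCauchy i.2 (fun i => I (i + 1)) t / (i.1 - t))
    (fun ⟨x, k⟩ => continuousOn_div_sub (hS.continuousOn_iterCauchy_tail (Nat.lt_succ_iff.1 k.2))
      (disjoint_left.1 hT x.2)) L
  refine ⟨s, w, hs, hL, hw, fun x hx k hk => (hquad (⟨x, hx⟩, ⟨k, by omega⟩)).trans ?_⟩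
  exact Finset.sum_congr rfl fun t _ => (mul_div_assoc _ _ _).symm

lemma iterCauchy_one_ne_zero (hS : IsNikishinFamily (m + 1) I Δ) {x : ℝ} (hx : x ∉ Δ 0) :
    iterCauchy 1 I x ≠ 0 := by
  obtain ⟨s, w, hs, hcard, hw, hquad⟩ := hS.exists_quadrature (T := {x}) (by simpa using hx) 1
  rw [hquad x (Finset.mem_singleton_self x) 0 (Nat.zero_le _)]
  simp only [iterCauchy, mul_one]
  exact cauchySum_ne_zero (hS.isDefiniteIntegral 0 (by omega)).ordConnected hs
    (Finset.card_pos.1 hcard) hw hx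

lemma exists_zeros_tail (hS : IsNikishinFamily (m + 1) I Δ) {g : ℕ → ℝ[X]} {N : ℕ → ℕ}
    (hg : ∀ k ≤ m + 1, (g k).degree < N k) (hN : ∀ k ≤ m, N (k + 1) ≤ N 0 + 1) {T : Finset ℝ}
    (hT : Disjoint (T : Set ℝ) (Δ 0)) (hcard : ∑ k ∈ Finset.range (m + 2), N k ≤ T.card)
    (hzero : ∀ x ∈ T, nikishinForm (m + 1) I g x = 0) :
    ∃ Z : Finset ℝ, ↑Z ⊆ Δ 0 ∧ Z.card = ∑ k ∈ Finset.range (m + 1), N (k + 1) ∧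
      ∀ z ∈ Z, nikishinForm m (fun i => I (i + 1)) (fun k => g (k + 1)) z = 0 := by
  obtain ⟨s, w, hs, hL, hw, hquad⟩ :=
    hS.exists_quadrature hT (∑ k ∈ Finset.range (m + 1), N (k + 1))
  refine exists_zeros_of_cauchySum_zeros (hS.isDefiniteIntegral 0 (by omega)).ordConnected hs hT hw
    (fun k hk => hS.continuousOn_iterCauchy_tail (Finset.mem_range_succ_iff.1 hk)) (hg 0 (by omega))
    (fun k hk => ?_) hL ((Finset.sum_range_succ' N (m + 1)).symm.trans_le hcard) fun x hx => ?_
  · have hk := Finset.mem_range_succ_iff.1 hk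
    exact (hg (k + 1) (by omega)).trans_le (by exact_mod_cast hN k hk)
  · rw [← hzero x hx, nikishinForm_succ]
    congr 1
    exact Finset.sum_congr rfl fun k hk => by rw [hquad x hx k (Finset.mem_range_succ_iff.1 hk)]

end IsNikishinFamily

/-- `n 0, …, n m` becomes decreasing once a suitable entry `n j` is made large enough; lowering one
entry of a decreasing multi-index yields such a sequence. -/
def NearlyDecr (m : ℕ) (n : ℕ → ℕ) : Prop := ∃ j, ∀ i k, i < k → k ≤ m → i ≠ j → n k ≤ n i

lemma Decr.le {m : ℕ} {n : ℕ → ℕ} (h : Decr m n) {i k : ℕ} (hik : i ≤ k) (hk : k ≤ m) :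
    n k ≤ n i := by
  induction k, hik using Nat.le_induction with
  | base => exact le_rfl
  | succ k _ ih => exact (h k (by omega)).trans (ih (by omega))

lemma Decr.nearlyDecr_update {m : ℕ} {n : ℕ → ℕ} (h : Decr m n) {j r : ℕ} (hr : r ≤ n j) :
    NearlyDecr m (Function.update n j r) := by
  refine ⟨j, fun i k hik hk hij => ?_⟩
  rw [Function.update_of_ne hij]
  rcases eq_or_ne k j with rfl | hkj
  · rw [Function.update_self]
    exact hr.trans (h.le hik.le hk)
  · rw [Function.update_of_ne hkj]
    exact h.le hik.le hk

/-- The sequence `f` with its term of index `1` removed. -/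
def eraseOne {α : Type*} (f : ℕ → α) : ℕ → α
  | 0 => f 0
  | k + 1 => f (k + 2)

namespace NearlyDecr

variable {m : ℕ} {n : ℕ → ℕ}

lemma shift (h : NearlyDecr (m + 1) n) : NearlyDecr m fun i => n (i + 1) := by
  obtain ⟨j, hj⟩ := h
  exact ⟨j - 1, fun i k hik hk hij => hj (i + 1) (k + 1) (by omega) (by omega) (by omega)⟩

lemma le_zero_or (h : NearlyDecr (m + 1) n) :
    (∀ k ≤ m, n (k + 1) ≤ n 0) ∨
      n 0 + 1 ≤ n 1 ∧ ∀ i k, 0 < i → i < k → k ≤ m + 1 → n k ≤ n i := by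
  obtain ⟨j, hj⟩ := h
  rcases eq_or_ne j 0 with rfl | hj0
  · have hdecr : ∀ i k, 0 < i → i < k → k ≤ m + 1 → n k ≤ n i :=
      fun i k hi hik hk => hj i k hik hk hi.ne'
    rcases lt_or_ge (n 0) (n 1) with h01 | h10
    · exact .inr ⟨h01, hdecr⟩
    · refine .inl fun k hk => ?_
      rcases k.eq_zero_or_pos with rfl | hk0
      · exact h10
      · exact (hdecr 1 (k + 1) one_pos (by omega) (by omega)).trans h10
  · exact .inl fun k hk => hj 0 (k + 1) (by omega) (by omega) hj0.symm

lemma eraseOne_of_decr (h : ∀ i k, 0 < i → i < k → k ≤ m + 1 → n k ≤ n i) :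
    NearlyDecr m (eraseOne n) := by
  refine ⟨0, fun i k hik hk hi => ?_⟩
  obtain ⟨i, rfl⟩ := Nat.exists_eq_succ_of_ne_zero hi
  obtain ⟨k, rfl⟩ := Nat.exists_eq_succ_of_ne_zero (Nat.ne_zero_of_lt hik)
  exact h (i + 2) (k + 2) (by omega) (by omega) (by omega)

end NearlyDecr

section Inversion

variable {Δ Δ' : Set ℝ} {J : (ℝ → ℝ) → ℝ} {s Z : Finset ℝ} {w v φ : ℝ → ℝ} {x α β : ℝ}

lemma cauchySum_cauchy (hJ : IsDefiniteIntegral J Δ') (hΔ : Disjoint Δ Δ') (hs : ↑s ⊆ Δ)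
    (hφ : ContinuousOn φ Δ') :
    cauchySum s (fun t => w t * J fun u => φ u / (t - u)) x =
      J fun u => φ u * ∑ t ∈ s, w t / ((x - t) * (t - u)) := by
  have hJsum := hJ.map_sum (s := s) (φ := fun t u => w t / (x - t) * (φ u / (t - u)))
    fun t ht => continuousOn_const.mul
      (continuousOn_div_sub hφ (disjoint_left.1 hΔ (hs ht)))
  simp only [hJ.map_const_mul] at hJsum
  calc cauchySum s (fun t => w t * J fun u => φ u / (t - u)) x
      = ∑ t ∈ s, w t / (x - t) * J fun u => φ u / (t - u) :=
        Finset.sum_congr rfl fun t _ => mul_div_right_comm _ _ _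
    _ = J fun u => ∑ t ∈ s, w t / (x - t) * (φ u / (t - u)) := hJsum.symm
    _ = J fun u => φ u * ∑ t ∈ s, w t / ((x - t) * (t - u)) := by
        congr 1
        funext u
        rw [Finset.mul_sum]
        exact Finset.sum_congr rfl fun t _ => by
          rw [div_mul_div_comm, mul_comm (w t), mul_div_assoc]

lemma cauchySum_cauchy_eq_of_inv (hJ : IsDefiniteIntegral J Δ') (hΔ : IsClosed Δ)
    (hdisj : Disjoint Δ Δ') (hs : ↑s ⊆ Δ) (hZ : ↑Z ⊆ Δ) (h0 : ∀ x ∉ Δ, cauchySum s w x ≠ 0)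
    (hinv : ∀ x ∉ Δ, (cauchySum s w x)⁻¹ = α * x + β + cauchySum Z v x)
    (hφ : ContinuousOn φ Δ') (hx : x ∉ Δ) :
    cauchySum s (fun t => w t * J fun u => φ u / (t - u)) x =
      cauchySum s w x * (α * J (fun u => -cauchySum s w u * φ u) +
        cauchySum Z (fun y => v y * J fun u => -cauchySum s w u * (φ u / (y - u))) x) := by
  have hσφ : ContinuousOn (fun u => -cauchySum s w u * φ u) Δ' :=
    ((continuousOn_cauchySum hs).mono hdisj.subset_compl_left).neg.mul hφ
  have hkernel : ContinuousOn (fun u => ∑ y ∈ Z, v y / ((x - y) * (y - u))) Δ' :=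
    continuousOn_finsetSum _ fun y hy => continuousOn_const.div (by fun_prop) fun u hu =>
      mul_ne_zero (sub_ne_zero.2 (ne_of_mem_of_not_mem (hZ hy) hx).symm)
        (sub_ne_zero.2 (hdisj.ne_of_mem (hZ hy) hu))
  simp only [← mul_div_assoc (-cauchySum s w _)]
  rw [cauchySum_cauchy hJ hdisj hs hφ, cauchySum_cauchy hJ hdisj hZ hσφ, ← hJ.map_const_mul α,
    ← hJ.map_add (continuousOn_const.fun_mul hσφ) (hσφ.fun_mul hkernel), ← hJ.map_const_mul]
  refine hJ.congr fun u hu => ?_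
  simp only [sum_div_mul_eq_of_inv hΔ hs hZ h0 hinv hx (disjoint_right.1 hdisj hu)]
  ring

end Inversion

/-- The family `J` with its first functional multiplied by the density `σ`. -/
def reweightHead (σ : ℝ → ℝ) (J : ℕ → (ℝ → ℝ) → ℝ) : ℕ → (ℝ → ℝ) → ℝ
  | 0 => fun φ => J 0 fun u => σ u * φ u
  | i + 1 => J (i + 1)

/-- The polynomial part that arises when `∑ g_k ŝ_{0,k-1}` is divided by `ŝ_{0,0}`. Here `α X + β`
is the polynomial part of `1 / ŝ_{0,0}`, and `α * c k` that of `ŝ_{0,k+1} / ŝ_{0,0}`. -/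
def quotientPart (m : ℕ) (α β : ℝ) (c : ℕ → ℝ) (g : ℕ → ℝ[X]) : ℝ[X] :=
  g 1 + (C α * X + C β) * g 0 + ∑ k ∈ Finset.range m, C (α * c k) * g (k + 2)

lemma degree_quotientPart_lt {m a d : ℕ} {g : ℕ → ℝ[X]} (h0 : (g 0).degree < a) (had : a + 1 ≤ d)
    (h1 : (g 1).degree < d) (hg : ∀ k < m, (g (k + 2)).degree < d) (α β : ℝ) (c : ℕ → ℝ) :
    (quotientPart m α β c g).degree < d := by
  have hlin : (C α * X + C β : ℝ[X]).degree < (2 : ℕ) :=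
    degree_linear_le.trans_lt (by norm_num)
  simp only [← mem_degreeLT, quotientPart] at h1 hg ⊢
  refine add_mem (add_mem h1 ?_) (sum_mem fun k hk => ?_)
  · rw [mem_degreeLT]
    exact (degree_mul_lt_of_degree_lt hlin h0).trans_le (by exact_mod_cast (by omega))
  · rw [← smul_eq_C_mul]
    exact Submodule.smul_mem _ _ (hg k (Finset.mem_range.1 hk))

lemma degree_eraseOne_lt {m : ℕ} {g : ℕ → ℝ[X]} {N : ℕ → ℕ} (hg : ∀ k ≤ m + 1, (g k).degree < N k) :
    ∀ k ≤ m, (eraseOne g k).degree < eraseOne N k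
  | 0, _ => hg 0 (by omega)
  | k + 1, hk => hg (k + 2) (by omega)

lemma eraseOne_le {m : ℕ} {N : ℕ → ℕ} (hN0 : N 0 + 1 ≤ N 1) (hN : ∀ k < m, N (k + 2) ≤ N 1) :
    ∀ k ≤ m, eraseOne N k ≤ N 1
  | 0, _ => (Nat.le_succ _).trans hN0
  | k + 1, hk => hN k hk

lemma eval_quotientPart_add_sum_eq_zero {m : ℕ} {σ x α β : ℝ} {g : ℕ → ℝ[X]} {c W F : ℕ → ℝ}
    (hσ : σ ≠ 0) (hinv : σ⁻¹ = α * x + β + F 0) (hW0 : W 0 = 1) (hW1 : W 1 = σ)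
    (hW : ∀ k < m, W (k + 2) = σ * (α * c k + F (k + 1)))
    (hzero : ∑ k ∈ Finset.range (m + 2), (g k).eval x * W k = 0) :
    (quotientPart m α β c g).eval x +
      ∑ k ∈ Finset.range (m + 1), (eraseOne g k).eval x * F k = 0 := by
  have hsum : ∑ k ∈ Finset.range m, (g (k + 2)).eval x * W (k + 2) =
      σ * (∑ k ∈ Finset.range m, α * c k * (g (k + 2)).eval x +
        ∑ k ∈ Finset.range m, (g (k + 2)).eval x * F (k + 1)) := by
    rw [← Finset.sum_add_distrib, Finset.mul_sum]
    refine Finset.sum_congr rfl fun k hk => ?_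
    rw [hW k (Finset.mem_range.1 hk)]
    ring
  rw [Finset.sum_range_succ', Finset.sum_range_succ', zero_add, hW0, hW1, hsum] at hzero
  rw [Finset.sum_range_succ']
  simp only [quotientPart, eraseOne, eval_add, eval_mul, eval_C, eval_X, eval_finsetSum]
  have hmul : σ * (α * x + β + F 0) = 1 := by rw [← hinv, mul_inv_cancel₀ hσ]
  apply mul_left_cancel₀ hσ
  linear_combination hzero + (g 0).eval x * hmul

lemma nikishinForm_of_succ_eq_zero {m : ℕ} {g : ℕ → ℝ[X]} (hg : ∀ k ≤ m, g (k + 1) = 0)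
    (I : ℕ → (ℝ → ℝ) → ℝ) (x : ℝ) : nikishinForm (m + 1) I g x = (g 0).eval x := by
  rw [nikishinForm_succ, Finset.sum_eq_zero fun k hk => ?_, add_zero]
  rw [hg k (Finset.mem_range_succ_iff.1 hk), eval_zero, zero_mul]

lemma nikishinForm_of_eraseOne_eq_zero {m : ℕ} {g : ℕ → ℝ[X]} (hg : ∀ k ≤ m, eraseOne g k = 0)
    (I : ℕ → (ℝ → ℝ) → ℝ) (x : ℝ) :
    nikishinForm (m + 1) I g x = (g 1).eval x * iterCauchy 1 I x := by
  have hg0 : g 0 = 0 := hg 0 (Nat.zero_le _)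
  have hg2 (k) (hk : k < m) : g (k + 2) = 0 := hg (k + 1) hk
  rw [nikishinForm_succ, hg0, eval_zero, zero_add, Finset.sum_range_succ',
    Finset.sum_eq_zero fun k hk => ?_, zero_add]
  rw [hg2 k (Finset.mem_range.1 hk), eval_zero, zero_mul]

lemma eq_zero_of_sum_le_card {m : ℕ} {N : ℕ → ℕ} {p : ℝ[X]} {T : Finset ℝ} {j : ℕ} (hj : j ≤ m)
    (hp : p.degree < N j) (hcard : ∑ k ∈ Finset.range (m + 1), N k ≤ T.card)
    (hzero : ∀ x ∈ T, p.eval x = 0) : p = 0 :=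
  have hN : N j ≤ T.card := (Finset.single_le_sum (fun _ _ => Nat.zero_le _)
    (Finset.mem_range_succ_iff.2 hj)).trans hcard
  eq_zero_of_degree_lt_of_eval_finset_eq_zero T (hp.trans_le (by exact_mod_cast hN)) hzero

namespace IsNikishinFamily

variable {m : ℕ} {I : ℕ → (ℝ → ℝ) → ℝ} {Δ : ℕ → Set ℝ} {s Z T : Finset ℝ} {w v : ℝ → ℝ}
  {x α β : ℝ} {g : ℕ → ℝ[X]} {N : ℕ → ℕ}

lemma reweight {σ : ℝ → ℝ} (hS : IsNikishinFamily m I Δ)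
    (hσ : 0 < m → ContinuousOn σ (Δ 0)) (hσc : 0 < m → HasConstSign (Δ 0) σ) :
    IsNikishinFamily m (reweightHead σ I) Δ where
  isDefiniteIntegral
    | 0, hm => (hS.isDefiniteIntegral 0 hm).reweight (hσ hm) (hσc hm)
    | i + 1, hi => hS.isDefiniteIntegral (i + 1) hi
  disjoint := hS.disjoint

lemma iterCauchy_add_two (hS : IsNikishinFamily (m + 1) I Δ) (hs : ↑s ⊆ Δ 0) (hZ : ↑Z ⊆ Δ 0)
    (h0 : ∀ x ∉ Δ 0, cauchySum s w x ≠ 0)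
    (hinv : ∀ x ∉ Δ 0, (cauchySum s w x)⁻¹ = α * x + β + cauchySum Z v x) (hx : x ∉ Δ 0) {k : ℕ}
    (hk : k < m) (hquad : iterCauchy (k + 2) I x =
      cauchySum s (fun t => w t * iterCauchy (k + 1) (fun i => I (i + 1)) t) x) :
    let I' := reweightHead (fun u => -cauchySum s w u) fun i => I (i + 1)
    iterCauchy (k + 2) I x = cauchySum s w x *
      (α * I' 0 (iterCauchy k fun i => I' (i + 1)) +
        cauchySum Z (fun y => v y * iterCauchy (k + 1) I' y) x) := by
  obtain ⟨m, rfl⟩ := Nat.exists_eq_add_of_le' (Nat.one_le_of_lt hk)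
  exact hquad.trans (cauchySum_cauchy_eq_of_inv (hS.isDefiniteIntegral 1 (by omega))
    (hS.isDefiniteIntegral 0 (by omega)).isCompact.isClosed (hS.disjoint 0 (by omega)) hs hZ h0 hinv
    (hS.tail.continuousOn_iterCauchy_tail (Nat.lt_succ_iff.1 hk)) hx)

lemma reweight_tail (hS : IsNikishinFamily (m + 1) I Δ) (hs : ↑s ⊆ Δ 0)
    (h0 : ∀ x ∉ Δ 0, cauchySum s w x ≠ 0) :
    IsNikishinFamily m (reweightHead (fun u => -cauchySum s w u) fun i => I (i + 1))
      fun i => Δ (i + 1) := by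
  have hdisj (hm : 0 < m) := hS.disjoint 0 (by omega)
  have hcont (hm : 0 < m) : ContinuousOn (fun u => -cauchySum s w u) (Δ 1) :=
    ((continuousOn_cauchySum hs).mono (hdisj hm).subset_compl_left).neg
  exact hS.tail.reweight hcont fun hm => hasConstSign_of_continuousOn
    (hS.isDefiniteIntegral 1 (by omega)).ordConnected.isPreconnected (hcont hm)
    fun u hu => neg_ne_zero.2 (h0 u (disjoint_right.1 (hdisj hm) hu))

/-- Dividing a vanishing form by `ŝ_{0,0}` exchanges the roles of `g 0` and `g 1`: the inverse of
`ŝ_{0,0}` is a linear polynomial plus a Cauchy transform, so `g 1` joins the polynomial part and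
`g 0` becomes the coefficient of a transform. -/
lemma exists_zeros_eraseOne (hS : IsNikishinFamily (m + 1) I Δ)
    (hg : ∀ k ≤ m + 1, (g k).degree < N k) (hN0 : N 0 + 1 ≤ N 1) (hN : ∀ k < m, N (k + 2) ≤ N 1)
    (hT : Disjoint (T : Set ℝ) (Δ 0)) (hcard : ∑ k ∈ Finset.range (m + 2), N k ≤ T.card)
    (hzero : ∀ x ∈ T, nikishinForm (m + 1) I g x = 0) :
    ∃ I', IsNikishinFamily m I' (fun i => Δ (i + 1)) ∧ ∃ Z : Finset ℝ, ↑Z ⊆ Δ 0 ∧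
      Z.card = ∑ k ∈ Finset.range (m + 1), eraseOne N k ∧
      ∀ z ∈ Z, nikishinForm m I' (eraseOne g) z = 0 := by
  have hI0 := hS.isDefiniteIntegral 0 (by omega)
  have herase (k) (hk : k ≤ m) : eraseOne N k ≤ N 1 + 1 :=
    Nat.le_succ_of_le (eraseOne_le hN0 hN k hk)
  have hsplit : ∑ k ∈ Finset.range (m + 1), eraseOne N k = ∑ k ∈ Finset.range m, N (k + 2) + N 0 :=
    Finset.sum_range_succ' _ _
  have hcard' : ∑ k ∈ Finset.range m, N (k + 2) + N 1 + N 0 ≤ T.card := by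
    rwa [Finset.sum_range_succ', Finset.sum_range_succ'] at hcard
  obtain ⟨s, w, hs, hL, hw, hquad⟩ :=
    hS.exists_quadrature hT (∑ k ∈ Finset.range m, N (k + 2) + N 0 + 1)
  have hne : s.Nonempty := Finset.card_pos.1 (by omega)
  obtain ⟨α, β, Z, v, hZ, hZs, hv, hinv⟩ := exists_inv_cauchySum_eq hI0.ordConnected hs hne hw
  have h0 (x) (hx : x ∉ Δ 0) := cauchySum_ne_zero hI0.ordConnected hs hne hw hx
  have hS' := hS.reweight_tail hs h0
  set I' := reweightHead (fun u => -cauchySum s w u) fun i => I (i + 1)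
  refine ⟨I', hS', exists_zeros_of_cauchySum_zeros hI0.ordConnected hZ hT hv
    (fun k hk => (hS'.continuousOn_iterCauchy (Finset.mem_range_succ_iff.1 hk)).mono
      hS.subset_regularSet_tail)
    (degree_quotientPart_lt (m := m) (hg 0 (by omega)) hN0 (hg 1 (by omega)) (fun k hk =>
      (hg (k + 2) (by omega)).trans_le (by exact_mod_cast hN k hk)) α β
      fun k => I' 0 (iterCauchy k fun i => I' (i + 1)))
    (fun k hk => (degree_eraseOne_lt hg k (Finset.mem_range_succ_iff.1 hk)).trans_le
      (by exact_mod_cast herase k (Finset.mem_range_succ_iff.1 hk)))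
    (by omega) (by omega) fun x hx => ?_⟩
  have hx0 : x ∉ Δ 0 := disjoint_left.1 hT hx
  refine eval_quotientPart_add_sum_eq_zero (W := fun k => iterCauchy k I x) (h0 x hx0) ?_ rfl ?_
    (fun k hk => hS.iterCauchy_add_two hs hZ h0 hinv hx0 hk (hquad x hx (k + 1) (by omega)))
    (hzero x hx)
  · simpa only [iterCauchy, mul_one] using hinv x hx0
  · simpa only [iterCauchy, mul_one] using hquad x hx 0 (Nat.zero_le _)

theorem eq_zero_of_nikishinForm_zeros (hS : IsNikishinFamily m I Δ) (hN : NearlyDecr m N)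
    (hg : ∀ k ≤ m, (g k).degree < N k) (hT : ↑T ⊆ regularSet m Δ)
    (hcard : ∑ k ∈ Finset.range (m + 1), N k ≤ T.card)
    (hzero : ∀ x ∈ T, nikishinForm m I g x = 0) : ∀ k ≤ m, g k = 0 := by
  induction m generalizing I Δ g N T with
  | zero =>
    intro k hk
    obtain rfl := Nat.le_zero.1 hk
    exact eq_zero_of_sum_le_card le_rfl (hg 0 le_rfl) hcard fun x hx => by
      simpa [nikishinForm, iterCauchy] using hzero x hx
  | succ m ih =>
    rw [regularSet_succ, subset_compl_iff_disjoint_right] at hT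
    rcases hN.le_zero_or with hN0 | ⟨hN01, hN1⟩
    · obtain ⟨Z, hZ, hZcard, hZ0⟩ :=
        hS.exists_zeros_tail hg (fun k hk => Nat.le_succ_of_le (hN0 k hk)) hT hcard hzero
      have hsucc : ∀ k ≤ m, g (k + 1) = 0 := ih hS.tail hN.shift (fun k hk => hg (k + 1) (by omega))
        (hZ.trans hS.subset_regularSet_tail) hZcard.ge hZ0
      have hg0 : g 0 = 0 := eq_zero_of_sum_le_card (Nat.zero_le _) (hg 0 (by omega)) hcard
        fun x hx => (nikishinForm_of_succ_eq_zero hsucc I x).symm.trans (hzero x hx)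
      rintro (_ | k) hk
      exacts [hg0, hsucc k (by omega)]
    · obtain ⟨I', hS', Z, hZ, hZcard, hZ0⟩ := hS.exists_zeros_eraseOne hg hN01
        (fun k hk => hN1 1 (k + 2) one_pos (by omega) (by omega)) hT hcard hzero
      have herase : ∀ k ≤ m, eraseOne g k = 0 := ih hS' (.eraseOne_of_decr hN1)
        (degree_eraseOne_lt hg) (hZ.trans hS.subset_regularSet_tail) hZcard.ge hZ0
      have hg1 : g 1 = 0 := eq_zero_of_sum_le_card (by omega) (hg 1 (by omega)) hcard
        fun x hx => by
          have h := (nikishinForm_of_eraseOne_eq_zero herase I x).symm.trans (hzero x hx)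
          exact (mul_eq_zero.1 h).resolve_right
            (hS.iterCauchy_one_ne_zero (disjoint_left.1 hT hx))
      rintro (_ | _ | k) hk
      exacts [herase 0 (by omega), hg1, herase (k + 1) (by omega)]

end IsNikishinFamily

lemma finrank_pi_degreeLT (m : ℕ) (N : ℕ → ℕ) :
    Module.finrank ℝ (∀ k : Fin (m + 1), degreeLT ℝ (N k)) = ∑ k ∈ Finset.range (m + 1), N k := by
  simp only [Module.finrank_pi_fintype, finrank_degreeLT, ← Fin.sum_univ_eq_sum_range]

/-- The coefficients of a `nikishinForm` given by a tuple of polynomials of bounded degree. -/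
def coeffTuple {m : ℕ} {N : ℕ → ℕ} (v : ∀ k : Fin (m + 1), degreeLT ℝ (N k)) (k : ℕ) : ℝ[X] :=
  v (Fin.ofNat (m + 1) k)

lemma coeffTuple_val {m : ℕ} {N : ℕ → ℕ} (v : ∀ k : Fin (m + 1), degreeLT ℝ (N k))
    (k : Fin (m + 1)) : coeffTuple v k = v k :=
  congrArg (fun i => (v i : ℝ[X])) (Fin.ofNat_val_eq_self k)

lemma degree_coeffTuple_lt {m : ℕ} {N : ℕ → ℕ} (v : ∀ k : Fin (m + 1), degreeLT ℝ (N k)) {k : ℕ}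
    (hk : k ≤ m) : (coeffTuple v k).degree < N k :=
  coeffTuple_val v ⟨k, Nat.lt_succ_of_le hk⟩ ▸ mem_degreeLT.1 (v ⟨k, Nat.lt_succ_of_le hk⟩).2

/-- The Nikishin forms with coefficients of degree less than `N 0, …, N m`, as a linear family of
functions. -/
def nikishinFormMap (m : ℕ) (I : ℕ → (ℝ → ℝ) → ℝ) (N : ℕ → ℕ) :
    (∀ k : Fin (m + 1), degreeLT ℝ (N k)) →ₗ[ℝ] ℝ → ℝ :=
  ∑ k : Fin (m + 1),
    LinearMap.mulRight ℝ (iterCauchy k I) ∘ₗ polyEval (N k) ∘ₗ LinearMap.proj k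

lemma nikishinFormMap_apply (m : ℕ) (I : ℕ → (ℝ → ℝ) → ℝ) (N : ℕ → ℕ)
    (v : ∀ k : Fin (m + 1), degreeLT ℝ (N k)) :
    nikishinFormMap m I N v = nikishinForm m I (coeffTuple v) := by
  ext x
  rw [nikishinForm, ← Fin.sum_univ_eq_sum_range fun k => (coeffTuple v k).eval x * iterCauchy k I x]
  simp [nikishinFormMap, polyEval, coeffTuple_val, LinearMap.sum_apply]

namespace IsNikishinFamily

variable {m : ℕ} {I : ℕ → (ℝ → ℝ) → ℝ} {Δ : ℕ → Set ℝ} {N : ℕ → ℕ}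

lemma isHaar_nikishinFormMap (hS : IsNikishinFamily m I Δ) (hN : NearlyDecr m N) :
    IsHaar (nikishinFormMap m I N) (regularSet m Δ) where
  continuousOn v := nikishinFormMap_apply m I N v ▸ hS.continuousOn_nikishinForm _
  eq_zero_of_zeros v T hT hcard hzero := by
    simp only [nikishinFormMap_apply] at hzero
    rw [finrank_pi_degreeLT] at hcard
    have hv := hS.eq_zero_of_nikishinForm_zeros hN (fun k hk => degree_coeffTuple_lt v hk) hT hcard
      hzero
    ext1 k
    exact Subtype.ext ((coeffTuple_val v k).symm.trans (hv k (Nat.lt_succ_iff.1 k.2)))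

lemma exists_zeros_of_orthogonal (hS : IsNikishinFamily (m + 1) I Δ) (hN : NearlyDecr m N)
    {f : ℝ → ℝ} (hf : ContinuousOn f (Δ 0))
    (h : ∀ k ≤ m, ∀ ν < N k,
      I 0 (fun x => x ^ ν * (f x * iterCauchy k (fun i => I (i + 1)) x)) = 0) :
    ∃ Z : Finset ℝ, ↑Z ⊆ Δ 0 ∧ Z.card = ∑ k ∈ Finset.range (m + 1), N k ∧ ∀ z ∈ Z, f z = 0 := by
  have hI0 := hS.isDefiniteIntegral 0 (by omega)
  have hcont (k) (hk : k ∈ Finset.range (m + 1)) :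
      ContinuousOn (fun x => f x * iterCauchy k (fun i => I (i + 1)) x) (Δ 0) :=
    hf.mul (hS.continuousOn_iterCauchy_tail (Finset.mem_range_succ_iff.1 hk))
  rw [← finrank_pi_degreeLT]
  refine hI0.exists_zeros ((hS.tail.isHaar_nikishinFormMap hN).mono hS.subset_regularSet_tail) hf
    fun v => ?_
  simp only [nikishinFormMap_apply, nikishinForm, Finset.mul_sum, mul_left_comm (f _)]
  refine (hI0.map_sum fun k hk => (coeffTuple v k).continuousOn.mul (hcont k hk)).trans
    (Finset.sum_eq_zero fun k hk => ?_)
  have hkm : k ≤ m := Finset.mem_range_succ_iff.1 hk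
  exact hI0.eval_mul_eq_zero (hcont k hk) (h k hkm) (degree_coeffTuple_lt v hkm)

lemma exists_nikishinForm_ne_zero (hS : IsNikishinFamily m I Δ) {g : ℕ → ℝ[X]} {k : ℕ} (hk : k ≤ m)
    (hg : g k ≠ 0) {U : Set ℝ} (hU : U.Infinite) (hUr : U ⊆ regularSet m Δ) :
    ∃ x ∈ U, nikishinForm m I g x ≠ 0 := by
  by_contra! hzero
  let M := (Finset.range (m + 1)).sup (fun i => (g i).natDegree) + 1
  have hgM (i : ℕ) (hi : i ≤ m) : (g i).degree < M := by
    refine degree_le_natDegree.trans_lt ?_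
    exact_mod_cast Nat.lt_succ_of_le
      (Finset.le_sup (f := fun i => (g i).natDegree) (Finset.mem_range_succ_iff.2 hi))
  obtain ⟨T, hT, hcard⟩ := hU.exists_subset_card_eq (∑ _ ∈ Finset.range (m + 1), M)
  exact hg (hS.eq_zero_of_nikishinForm_zeros (N := fun _ => M) ⟨0, fun _ _ _ _ _ => le_rfl⟩ hgM
    (hT.trans hUr) hcard.ge (fun x hx => hzero x (hT hx)) k hk)

end IsNikishinFamily

/-- Integration against the measure `σ_i = (e i) • (μ i)`, for real integrands. -/
def sigmaInt (μ : ℕ → Measure ℝ) (e : ℕ → ℝ) (i : ℕ) (φ : ℝ → ℝ) : ℝ := e i * ∫ t, φ t ∂(μ i)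

lemma ae_mem_convexHull_msupport (μ : Measure ℝ) : ∀ᵐ x ∂μ, x ∈ convexHull ℝ (msupport μ) := by
  filter_upwards [Measure.support_mem_ae (μ := μ)] with x hx
  exact subset_convexHull ℝ _ fun U hU hxU =>
    ((Measure.mem_support_iff_forall x).1 hx U (hU.mem_nhds hxU)).ne'

lemma measure_compl_finset_ne_zero {μ : Measure ℝ} (hμ : (msupport μ).Infinite) (s : Finset ℝ) :
    μ (↑s)ᶜ ≠ 0 := by
  obtain ⟨x, hx, hxs⟩ := hμ.exists_notMem_finset s
  exact hx _ s.finite_toSet.isClosed.isOpen_compl hxs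

namespace NikSys

variable {m : ℕ} (S : NikSys m)

lemma isDefiniteIntegral {i : ℕ} (hi : i ≤ m) :
    IsDefiniteIntegral (sigmaInt S.μ S.e i) (Icc (S.a i) (S.b i)) where
  isCompact := isCompact_Icc
  ordConnected := ordConnected_Icc
  exists_density := by
    have he : S.e i ≠ 0 := by rcases S.sgn i with h | h <;> simp [h]
    refine ⟨S.μ i, fun _ => S.e i, S.fin i, S.hull i hi ▸ ae_mem_convexHull_msupport (S.μ i),
      measure_compl_finset_ne_zero (S.inf i hi), continuousOn_const, .const he, fun φ => ?_⟩
    rw [sigmaInt, integral_const_mul]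

lemma isNikishinFamily {p j : ℕ} (h : p + j ≤ m + 1) :
    IsNikishinFamily p (fun i => sigmaInt S.μ S.e (i + j))
      fun i => Icc (S.a (i + j)) (S.b (i + j)) where
  isDefiniteIntegral i hi := S.isDefiniteIntegral (by omega)
  disjoint i hi := by
    rw [disjoint_iff_inter_eq_empty, Nat.add_right_comm]
    exact S.disj (i + j) (by omega)

end NikSys

section RealPoints

variable (μ : ℕ → Measure ℝ) (e : ℕ → ℝ)

lemma nikhat_ofReal (j g : ℕ) (x : ℝ) :
    nikhat μ e j g x = (iterCauchy (g + 1) (fun i => sigmaInt μ e (i + j)) x : ℝ) := by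
  induction g generalizing j x with
  | zero =>
    simp only [nikhat, iterCauchy, sigmaInt, zero_add, Complex.ofReal_mul,
      ← integral_complex_ofReal]
    push_cast
    rfl
  | succ g ih =>
    rw [nikhat, iterCauchy, sigmaInt, zero_add, Complex.ofReal_mul, ← integral_complex_ofReal]
    simp only [ih, Nat.add_right_comm _ 1 j]
    push_cast
    rfl

lemma wt_ofReal (j k : ℕ) (x : ℝ) :
    wt μ e j k x = (iterCauchy (k - j) (fun i => sigmaInt μ e (i + (j + 1))) x : ℝ) := by
  rw [wt]
  split_ifs with h
  · rw [nikhat_ofReal, show k - (j + 1) + 1 = k - j by omega]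
  · rw [Nat.sub_eq_zero_of_le (not_lt.1 h), iterCauchy, Complex.ofReal_one]

lemma linForm_ofReal {m j : ℕ} (hj : j ≤ m) (A : ℕ → ℝ[X]) (x : ℝ) :
    linForm μ e m j A x =
      (nikishinForm (m - j) (fun i => sigmaInt μ e (i + (j + 1))) (fun k => A (k + j)) x : ℝ) := by
  rw [linForm, nikishinForm, ← Finset.Ico_add_one_right_eq_Icc, Finset.sum_Ico_eq_sum_range,
    Nat.sub_add_comm hj, Complex.ofReal_sum]
  refine Finset.sum_congr rfl fun k _ => ?_
  rw [wt_ofReal, Complex.ofReal_mul, Nat.add_sub_cancel_left, add_comm j k]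
  exact congrArg (· * _) (aeval_algebraMap_apply_eq_algebraMap_eval x (A (k + j)))

lemma sInt_ofReal (j k : ℕ) (f : ℝ → ℝ) :
    sInt μ e j k (fun x => f x) = (sigmaInt μ e j fun x =>
      f x * iterCauchy (k - j) (fun i => sigmaInt μ e (i + (j + 1))) x : ℝ) := by
  simp only [sInt, sigmaInt, wt_ofReal, Complex.ofReal_mul, ← integral_complex_ofReal]

lemma linForm_combination (m j : ℕ) (A A' : ℕ → ℝ[X]) (c d : ℝ) (z : ℂ) :
    linForm μ e m j (c • A + d • A') z = c * linForm μ e m j A z + d * linForm μ e m j A' z := by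
  simp only [linForm, Finset.mul_sum, ← Finset.sum_add_distrib]
  refine Finset.sum_congr rfl fun k _ => ?_
  simp only [Pi.add_apply, Pi.smul_apply, _root_.map_add, map_smul, Complex.real_smul]
  ring

end RealPoints

namespace NikSys

variable {m₁ m₂ : ℕ} (S : NikSys m₁)

/-- The linear form `𝒜_{n,0}` with coefficients `A`, restricted to the real line. -/
def form (A : ℕ → ℝ[X]) : ℝ → ℝ := nikishinForm m₁ (fun i => sigmaInt S.μ S.e (i + 1)) A

lemma Icc_zero_eq {S1 : NikSys m₁} {S2 : NikSys m₂} (h : S1.μ 0 = S2.μ 0) :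
    Icc (S1.a 0) (S1.b 0) = Icc (S2.a 0) (S2.b 0) := by
  rw [← S1.hull 0 (Nat.zero_le _), ← S2.hull 0 (Nat.zero_le _), h]

lemma Icc_zero_subset_regularSet :
    Icc (S.a 0) (S.b 0) ⊆ regularSet m₁ fun i => Icc (S.a (i + 1)) (S.b (i + 1)) :=
  (S.isNikishinFamily (j := 0) le_rfl).subset_regularSet_tail

lemma continuousOn_form (A : ℕ → ℝ[X]) : ContinuousOn (S.form A) (Icc (S.a 0) (S.b 0)) :=
  ((S.isNikishinFamily le_rfl).continuousOn_nikishinForm A).mono S.Icc_zero_subset_regularSet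

lemma form_combination (A A' : ℕ → ℝ[X]) (c d x : ℝ) :
    S.form (c • A + d • A') x = c * S.form A x + d * S.form A' x := by
  simp only [form, nikishinForm, Finset.mul_sum, ← Finset.sum_add_distrib]
  refine Finset.sum_congr rfl fun k _ => ?_
  simp only [Pi.add_apply, Pi.smul_apply, eval_add, eval_smul, smul_eq_mul]
  ring

lemma exists_linForm_ne_zero {j : ℕ} (hj : j ≤ m₁) {A : ℕ → ℝ[X]} (hA : A j ≠ 0) :
    ∃ z ∈ (if j < m₁ then (cpx (Icc (S.a (j + 1)) (S.b (j + 1))))ᶜ else univ),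
      linForm S.μ S.e m₁ j A z ≠ 0 := by
  have hU : Ioi (S.b (j + 1)) ⊆
      regularSet (m₁ - j) fun i => Icc (S.a (i + (j + 1))) (S.b (i + (j + 1))) :=
    fun x hx _ hxΔ => not_lt_of_ge hxΔ.2 (by simpa using hx)
  obtain ⟨x, hx, hx0⟩ := (S.isNikishinFamily (j := j + 1) (by omega)).exists_nikishinForm_ne_zero
    (g := fun k => A (k + j)) (Nat.zero_le (m₁ - j)) (by simpa using hA) (Ioi_infinite _) hU
  refine ⟨x, ?_, ?_⟩
  · split_ifs
    · rintro ⟨y, hy, hyx⟩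
      exact not_lt_of_ge hy.2 (Complex.ofReal_injective hyx ▸ hx)
    · trivial
  · rwa [linForm_ofReal _ _ hj, Complex.ofReal_ne_zero]

end NikSys

/-- The orthogonality relations of mixed type satisfied by the form with coefficients `A`, with the
integrals taken over `ℝ` instead of `ℂ`. -/
def IsOrthogonal {m₁ m₂ : ℕ} (S1 : NikSys m₁) (S2 : NikSys m₂) (n : ℕ → ℕ) (A : ℕ → ℝ[X]) : Prop :=
  ∀ k ≤ m₂, ∀ ν < n k, sigmaInt S2.μ S2.e 0 (fun x =>
    x ^ ν * (S1.form A x * iterCauchy k (fun i => sigmaInt S2.μ S2.e (i + 1)) x)) = 0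

section Orthogonality

variable {m₁ m₂ : ℕ} {S1 : NikSys m₁} {S2 : NikSys m₂} {n n' N : ℕ → ℕ} {A A' : ℕ → ℝ[X]}

lemma IsMOP.isOrthogonal (h : IsMOP m₁ m₂ S1 S2 N n A) : IsOrthogonal S1 S2 n A := by
  intro k hk ν hν
  have hform (x : ℝ) : linForm S1.μ S1.e m₁ 0 A x = S1.form A x :=
    linForm_ofReal S1.μ S1.e (Nat.zero_le m₁) A x
  have hzero := h.2.2 k hk ν hν
  simp only [hform, ← Complex.ofReal_pow, ← Complex.ofReal_mul] at hzero
  rw [sInt_ofReal, Complex.ofReal_eq_zero] at hzero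
  simpa only [mul_assoc, Nat.sub_zero, zero_add] using hzero

namespace IsOrthogonal

lemma mono (h : IsOrthogonal S1 S2 n A) (hn : n' ≤ n) : IsOrthogonal S1 S2 n' A :=
  fun k hk ν hν => h k hk ν (hν.trans_le (hn k))

lemma combination (h : IsOrthogonal S1 S2 n A) (h' : IsOrthogonal S1 S2 n A')
    (hbase : S1.μ 0 = S2.μ 0) (c d : ℝ) : IsOrthogonal S1 S2 n (c • A + d • A') := by
  intro k hk ν hν
  have hS2 := S2.isNikishinFamily (j := 0) le_rfl
  have hI := S2.isDefiniteIntegral (Nat.zero_le m₂)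
  have hcont (c : ℝ) (A : ℕ → ℝ[X]) : ContinuousOn (fun x => c *
      (x ^ ν * (S1.form A x * iterCauchy k (fun i => sigmaInt S2.μ S2.e (i + 1)) x)))
      (Icc (S2.a 0) (S2.b 0)) :=
    continuousOn_const.mul ((continuousOn_pow ν).mul
      ((NikSys.Icc_zero_eq hbase ▸ S1.continuousOn_form A).mul
        (hS2.continuousOn_iterCauchy_tail hk)))
  have hsum := hI.map_add (hcont c A) (hcont d A')
  simp only [hI.map_const_mul, h k hk ν hν, h' k hk ν hν, mul_zero, add_zero] at hsum
  rw [← hsum]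
  congr 1
  funext x
  rw [S1.form_combination]
  ring

theorem eq_zero (h : IsOrthogonal S1 S2 n A) (hbase : S1.μ 0 = S2.μ 0) (hn : NearlyDecr m₂ n)
    (hN : NearlyDecr m₁ N) (hA : ∀ k ≤ m₁, (A k).degree < N k) (hsum : msum m₁ N ≤ msum m₂ n) :
    ∀ k ≤ m₁, A k = 0 := by
  have hIcc := NikSys.Icc_zero_eq hbase
  have hS2 := S2.isNikishinFamily (j := 0) le_rfl
  obtain ⟨Z, hZ, hcard, hzero⟩ :=
    hS2.exists_zeros_of_orthogonal hn (hIcc ▸ S1.continuousOn_form A) h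
  exact (S1.isNikishinFamily le_rfl).eq_zero_of_nikishinForm_zeros hN hA
    (hZ.trans (hIcc ▸ S1.Icc_zero_subset_regularSet)) (hsum.trans hcard.ge) hzero

end IsOrthogonal

end Orthogonality

lemma bump_eq_update (l : ℕ) (n : ℕ → ℕ) : bump l n = Function.update n l (n l + 1) := by
  ext k
  rcases eq_or_ne k l with rfl | hk
  · simp [bump]
  · simp [bump, hk]

lemma le_bump (l : ℕ) (n : ℕ → ℕ) : n ≤ bump l n := fun k => by
  unfold bump
  split_ifs <;> simp

lemma msum_update {m j : ℕ} (hj : j ≤ m) (n : ℕ → ℕ) (r : ℕ) :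
    msum m (Function.update n j r) + n j = msum m n + r := by
  have hj' := Finset.mem_range_succ_iff.2 hj
  rw [msum, msum, Finset.sum_update_of_mem hj',
    Finset.sum_eq_add_sum_sdiff_singleton_of_mem hj' n]
  ring

lemma msum_bump {m l : ℕ} (hl : l ≤ m) (n : ℕ → ℕ) : msum m (bump l n) = msum m n + 1 := by
  have := msum_update hl n (n l + 1)
  rw [bump_eq_update]
  omega

lemma nearlyDecr_of_decr_bump {m l : ℕ} {n : ℕ → ℕ} (h : Decr m (bump l n)) : NearlyDecr m n := by
  simpa [bump_eq_update] using h.nearlyDecr_update (le_bump l n l)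

lemma degree_combination_lt {p q : ℝ[X]} {M : WithBot ℕ} (hp : p.degree < M) (hq : q.degree < M)
    (c d : ℝ) : (c • p + d • q).degree < M :=
  (degree_add_le _ _).trans_lt
    (max_lt ((degree_smul_le _ _).trans_lt hp) ((degree_smul_le _ _).trans_lt hq))

section Combination

variable {m₁ m₂ : ℕ} {S1 : NikSys m₁} {S2 : NikSys m₂} {n1 n2 : ℕ → ℕ} {l₁ l₂ : ℕ}
  {A A' : ℕ → ℝ[X]} {c d : ℝ}

lemma exists_combination_ne_zero (hbase : S1.μ 0 = S2.μ 0) (hl₂ : l₂ ≤ m₂)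
    (h1l : Decr m₁ (bump l₁ n1)) (h2l : Decr m₂ (bump l₂ n2)) (hsum : msum m₂ n2 + 1 = msum m₁ n1)
    (hA : IsMOP m₁ m₂ S1 S2 n1 n2 A) (hA' : IsMOP m₁ m₂ S1 S2 (bump l₁ n1) (bump l₂ n2) A')
    (hcd : 0 < |c| + |d|) : ∃ k ≤ m₁, (c • A + d • A') k ≠ 0 := by
  by_contra! hzero
  rcases eq_or_ne d 0 with rfl | hd
  · have hc : c ≠ 0 := by simpa using hcd
    obtain ⟨k, hk, hAk⟩ := hA.2.1
    exact hAk (by simpa [hc] using hzero k hk)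
  · have hdeg (k : ℕ) (hk : k ≤ m₁) : (A' k).degree < n1 k := by
      have hdA' : d • A' k = -(c • A k) := eq_neg_of_add_eq_zero_right (hzero k hk)
      rw [← degree_smul_of_smul_regular (A' k) (IsSMulRegular.of_ne_zero hd), hdA', degree_neg]
      exact (degree_smul_le c (A k)).trans_lt (hA.1 k hk)
    obtain ⟨k, hk, hA'k⟩ := hA'.2.1
    refine hA'k (hA'.isOrthogonal.eq_zero hbase ?_ (nearlyDecr_of_decr_bump h1l) hdeg ?_ k hk)
    · simpa using h2l.nearlyDecr_update (j := l₂) le_rfl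
    · rw [msum_bump hl₂, hsum]

lemma le_degree_combination (hbase : S1.μ 0 = S2.μ 0) (hl₁ : l₁ ≤ m₁) (hl₂ : l₂ ≤ m₂)
    (h1l : Decr m₁ (bump l₁ n1)) (h2l : Decr m₂ (bump l₂ n2)) (hsum : msum m₂ n2 + 1 = msum m₁ n1)
    (hA : IsMOP m₁ m₂ S1 S2 n1 n2 A) (hA' : IsMOP m₁ m₂ S1 S2 (bump l₁ n1) (bump l₂ n2) A')
    (hcd : 0 < |c| + |d|) {j : ℕ} (hj : j ≤ m₁) (hn1j : 2 ≤ n1 j) :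
    ((n1 j - 2 : ℕ) : WithBot ℕ) ≤ (c • A j + d • A' j).degree := by
  by_contra! hlt
  obtain ⟨k, hk, hne⟩ := exists_combination_ne_zero hbase hl₂ h1l h2l hsum hA hA' hcd
  have horth := hA.isOrthogonal.combination (hA'.isOrthogonal.mono (le_bump l₂ n2)) hbase c d
  have hn1 : n1 j ≤ bump l₁ n1 j := le_bump l₁ n1 j
  refine hne (horth.eq_zero hbase (nearlyDecr_of_decr_bump h2l)
    (h1l.nearlyDecr_update (j := j) (r := n1 j - 2) (by omega)) (fun i hi => ?_) ?_ k hk)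
  · rcases eq_or_ne i j with rfl | hij
    · simpa using hlt
    · rw [Function.update_of_ne hij]
      refine degree_combination_lt ((hA.1 i hi).trans_le ?_) (hA'.1 i hi) c d
      exact_mod_cast le_bump l₁ n1 i
  · have hupdate := msum_update hj (bump l₁ n1) (n1 j - 2)
    have hbump := msum_bump hl₁ n1
    omega

theorem combination_not_trivial_general (hbase : S1.μ 0 = S2.μ 0) (hl₁ : l₁ ≤ m₁) (hl₂ : l₂ ≤ m₂)
    (h1l : Decr m₁ (bump l₁ n1)) (h2l : Decr m₂ (bump l₂ n2)) (hsum : msum m₂ n2 + 1 = msum m₁ n1)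
    (hA : IsMOP m₁ m₂ S1 S2 n1 n2 A) (hA' : IsMOP m₁ m₂ S1 S2 (bump l₁ n1) (bump l₂ n2) A')
    (hcd : 0 < |c| + |d|) :
    ∀ j ≤ m₁, 2 ≤ n1 j →
      ((n1 j - 2 : ℕ) : WithBot ℕ) ≤ (c • A j + d • A' j).degree ∧
        ∃ z ∈ (if j < m₁ then (cpx (Icc (S1.a (j + 1)) (S1.b (j + 1))))ᶜ else (univ : Set ℂ)),
          (c : ℂ) * linForm S1.μ S1.e m₁ j A z + (d : ℂ) * linForm S1.μ S1.e m₁ j A' z ≠ 0 := by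
  intro j hj hn1j
  have hdeg := le_degree_combination hbase hl₁ hl₂ h1l h2l hsum hA hA' hcd hj hn1j
  have hne : (c • A + d • A') j ≠ 0 := fun h0 => by
    rw [show c • A j + d • A' j = 0 from h0, degree_zero] at hdeg
    exact (WithBot.bot_lt_coe _).not_ge hdeg
  simpa only [linForm_combination] using And.intro hdeg (S1.exists_linForm_ne_zero hj hne)

end Combination

/-- If `n_{1,m₁} ≥ 1` and `|A| + |B| > 0`, then for every `j` with
`n_{1,j} ≥ 2` the polynomial `A·a_{n,j} + B·a_{n^l,j}` has degree `≥ n_{1,j} - 2`,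
and the form `𝒢_{n,j} = A·𝒜_{n,j} + B·𝒜_{n^l,j}` is not identically zero. -/
theorem combination_not_trivial
    (m₁ m₂ : ℕ) (S1 : NikSys m₁) (S2 : NikSys m₂)
    (hbase : S1.μ 0 = S2.μ 0 ∧ S1.e 0 = S2.e 0)
    (n1 n2 : ℕ → ℕ) (l₁ l₂ : ℕ) (hl₁ : l₁ ≤ m₁) (hl₂ : l₂ ≤ m₂)
    (h1 : Decr m₁ n1) (h2 : Decr m₂ n2)
    (h1l : Decr m₁ (bump l₁ n1)) (h2l : Decr m₂ (bump l₂ n2))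
    (hsum : msum m₂ n2 + 1 = msum m₁ n1) (hlast : 1 ≤ n1 m₁)
    (A A' : ℕ → Polynomial ℝ)
    (hA : IsMOP m₁ m₂ S1 S2 n1 n2 A) (hAm : MonicLast m₁ A)
    (hA' : IsMOP m₁ m₂ S1 S2 (bump l₁ n1) (bump l₂ n2) A') (hA'm : MonicLast m₁ A')
    (c d : ℝ) (hcd : 0 < |c| + |d|) :
    ∀ j ≤ m₁, 2 ≤ n1 j →
      (((n1 j - 2 : ℕ) : WithBot ℕ) ≤ (c • A j + d • A' j).degree ∧
        ∃ z ∈ (if j < m₁ then (cpx (Set.Icc (S1.a (j+1)) (S1.b (j+1))))ᶜ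
                else (Set.univ : Set ℂ)),
          (c : ℂ) * linForm S1.μ S1.e m₁ j A z +
            (d : ℂ) * linForm S1.μ S1.e m₁ j A' z ≠ 0) :=
  combination_not_trivial_general hbase.1 hl₁ hl₂ h1l h2l hsum hA hA' hcd

end
end
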